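/- Let 1 ≤ r < 2 and fix φ and φ_i as in the context. There exists a constant C such that for every jump collection (N_k)_{k≥0}, every sequence (f_i)_{i∈ℤ} of measurable functions on ℝ with ‖(f_i)‖_{1,r} < ∞, and every λ > 0, the Lebesgue measure of the set { x ∈ ℝ : (Σ_{k≥1} |Σ_{N_{k−1}(x) < i ≤ N_k(x)} (φ_i * f_i)(x)|^r)^{1/r} > λ } is at most (C/λ) ‖(f_i)‖_{1,r}. -/

import Mathlib

open MeasureTheory ENNReal
open scoped FourierTransform NNReal

noncomputable section

/-- A jump collection: a sequence of measurable integer-valued functions on `ℝ`,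
nondecreasing in the index. -/
def IsJumpCollection (Nk : ℕ → ℝ → ℤ) : Prop :=
  (∀ k, Measurable (Nk k)) ∧ ∀ (k : ℕ) (x : ℝ), Nk k x ≤ Nk (k + 1) x

/-- The dilate `φ_i(x) = 2^i φ(2^i x)` of a Schwartz function `φ`. -/
def dilate (φ : SchwartzMap ℝ ℂ) (i : ℤ) : ℝ → ℂ :=
  fun x => ((2 : ℝ) ^ i : ℝ) • φ (((2 : ℝ) ^ i) * x)

/-- Convolution `(φ_i * h)(x) = ∫ φ_i(x - y) h(y) dy`. -/
def conv (φi : ℝ → ℂ) (h : ℝ → ℂ) : ℝ → ℂ :=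
  fun x => ∫ y : ℝ, φi (x - y) * h y

/-- The mixed norm `‖(f_i)‖_{1,r} = ‖(∑_i |f_i|^r)^(1/r)‖_{L^1}`. -/
def mixedNorm1 (r : ℝ) (f : ℤ → ℝ → ℂ) : ℝ≥0∞ :=
  ∫⁻ x : ℝ, (∑' i : ℤ, (ENNReal.ofReal ‖f i x‖) ^ r) ^ (1 / r)

/-!
The jumps of size `μ` of the partial sums `∑_{i ≤ n} φ_i * f_i` are counted in `L²` by comparison
with the dyadic martingale `E_n F` of `F = ∑ φ_i * f_i`. The mean-zero kernel `φ_i` and `E_n` are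
almost orthogonal when `i` and `n` are far apart, so the errors `∑_{i ≤ n} φ_i * f_i - E_n F` are
square summable in `n`; and a greedily chosen chain of `μ`-jumps of a martingale is controlled by
its square function, because the cross terms form a martingale transform with vanishing integral.
Splitting each `f_i` at height `μ` interpolates this with the trivial `L¹` bound and gives the
strong type `(r, r)` estimate for the `r`-variation, for each `r < 2`.

For the weak type bound, stop the dyadic averages of the scalar function `(∑ |f_i|^r)^(1/r)` at
level `lam`, and decompose all the `f_i` along the same intervals. The good parts fall under the
strong type bound. The `i`-th bad part has mean zero on each stopping interval, hence off the
enlarged intervals `∑_i |φ_i * b_i|` is bounded in `L¹`: the kernel of each `φ_i` is either nearly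
constant on the interval or concentrated near it. There the variation is at most this sum.
-/

/-! ### Lebesgue integrals and kernels -/

section Kernels

variable {α β : Type*} [MeasurableSpace α] [MeasurableSpace β]

lemma enorm_le_ofReal {z : ℂ} {a : ℝ} (h : ‖z‖ ≤ a) : ‖z‖ₑ ≤ ENNReal.ofReal a := by
  rw [← ofReal_norm]
  exact ENNReal.ofReal_le_ofReal h

lemma enorm_ofReal_mul {a : ℝ} (ha : 0 ≤ a) (z : ℂ) :
    ‖(a : ℂ) * z‖ₑ = ENNReal.ofReal a * ‖z‖ₑ := by
  rw [enorm_mul, ← ofReal_norm, Complex.norm_real, Real.norm_of_nonneg ha]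

lemma add_sq_le_two_mul (a b : ℝ≥0∞) : (a + b) ^ 2 ≤ 2 * (a ^ 2 + b ^ 2) := by
  have := ENNReal.rpow_add_le_mul_rpow_add_rpow a b one_le_two
  norm_num at this
  exact_mod_cast this

lemma sq_lintegral_mul_le {μ : Measure α} {k g : α → ℝ≥0∞} (hk : Measurable k)
    (hg : Measurable g) :
    (∫⁻ y, k y * g y ∂μ) ^ 2 ≤ (∫⁻ y, k y ∂μ) * ∫⁻ y, k y * g y ^ 2 ∂μ := by
  have sqrt_sq (a : ℝ≥0∞) : (a ^ (1 / 2 : ℝ)) ^ 2 = a := by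
    rw [← ENNReal.rpow_natCast, ← ENNReal.rpow_mul]
    norm_num
  have hölder := ENNReal.lintegral_mul_le_Lp_mul_Lq μ Real.HolderConjugate.two_two
    (f := fun y => k y ^ (1 / 2 : ℝ)) (g := fun y => k y ^ (1 / 2 : ℝ) * g y)
    (hk.pow_const _).aemeasurable ((hk.pow_const _).mul hg).aemeasurable
  simp only [Pi.mul_apply, ← mul_assoc, ← sq, ENNReal.rpow_two, mul_pow, sqrt_sq] at hölder
  simpa only [mul_pow, sqrt_sq] using pow_le_pow_left' hölder 2

variable {μ : Measure α} {ν : Measure β} [SFinite μ] [SFinite ν]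

lemma lintegral_le_of_schur {T : α → ℝ≥0∞} {k : α → β → ℝ≥0∞} {g : β → ℝ≥0∞} {b : ℝ≥0∞}
    (hk : Measurable (Function.uncurry k)) (hg : Measurable g)
    (hT : ∀ x, T x ≤ ∫⁻ y, k x y * g y ∂ν) (hb : ∀ y, ∫⁻ x, k x y ∂μ ≤ b) :
    ∫⁻ x, T x ∂μ ≤ b * ∫⁻ y, g y ∂ν := by
  have hm : Measurable (Function.uncurry fun x y => k x y * g y) :=
    hk.mul (hg.comp measurable_snd)
  calc ∫⁻ x, T x ∂μ ≤ ∫⁻ x, ∫⁻ y, k x y * g y ∂ν ∂μ := lintegral_mono hT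
    _ = ∫⁻ y, ∫⁻ x, k x y * g y ∂μ ∂ν := lintegral_lintegral_swap hm.aemeasurable
    _ ≤ ∫⁻ y, b * g y ∂ν := by
        gcongr with y
        rw [lintegral_mul_const _ hk.of_uncurry_right]
        gcongr
        exact hb y
    _ = b * ∫⁻ y, g y ∂ν := lintegral_const_mul _ hg

lemma lintegral_sq_le_of_schur {T : α → ℝ≥0∞} {k : α → β → ℝ≥0∞} {g : β → ℝ≥0∞}
    {a b : ℝ≥0∞} (hk : Measurable (Function.uncurry k)) (hg : Measurable g)
    (hT : ∀ x, T x ≤ ∫⁻ y, k x y * g y ∂ν) (ha : ∀ x, ∫⁻ y, k x y ∂ν ≤ a)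
    (hb : ∀ y, ∫⁻ x, k x y ∂μ ≤ b) :
    ∫⁻ x, T x ^ 2 ∂μ ≤ a * b * ∫⁻ y, g y ^ 2 ∂ν := by
  have hm : Measurable (Function.uncurry fun x y => k x y * g y ^ 2) :=
    hk.mul ((hg.comp measurable_snd).pow_const 2)
  calc ∫⁻ x, T x ^ 2 ∂μ ≤ ∫⁻ x, a * ∫⁻ y, k x y * g y ^ 2 ∂ν ∂μ := by
        gcongr with x
        calc T x ^ 2 ≤ (∫⁻ y, k x y * g y ∂ν) ^ 2 := by gcongr; exact hT x
          _ ≤ (∫⁻ y, k x y ∂ν) * ∫⁻ y, k x y * g y ^ 2 ∂ν :=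
            sq_lintegral_mul_le hk.of_uncurry_left hg
          _ ≤ a * ∫⁻ y, k x y * g y ^ 2 ∂ν := by gcongr; exact ha x
    _ = a * ∫⁻ x, ∫⁻ y, k x y * g y ^ 2 ∂ν ∂μ := lintegral_const_mul _ hm.lintegral_prod_right
    _ ≤ a * (b * ∫⁻ y, g y ^ 2 ∂ν) := by
        gcongr
        exact lintegral_le_of_schur hk (hg.pow_const 2) (fun _ => le_rfl) hb
    _ = a * b * ∫⁻ y, g y ^ 2 ∂ν := (mul_assoc _ _ _).symm

end Kernels

section SubMarkov

variable {α : Type*} [MeasureSpace α]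

/-- A symmetric sub-Markov kernel on `α`: the abstract form of the averaging kernels of the dyadic
martingale and of the stopping intervals. -/
structure IsSymmSubMarkov (κ : α → α → ℝ) : Prop where
  measurable : Measurable (Function.uncurry κ)
  nonneg : ∀ x z, 0 ≤ κ x z
  symm : ∀ x z, κ x z = κ z x
  mass_le : ∀ x, ∫⁻ z, ENNReal.ofReal (κ x z) ≤ 1

/-- The integral operator `h ↦ ∫ κ(·, z) h(z) dz`. -/
def kernelOp (κ : α → α → ℝ) (h : α → ℂ) (x : α) : ℂ := ∫ z, (κ x z : ℂ) * h z

namespace IsSymmSubMarkov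

variable {κ : α → α → ℝ} (hκ : IsSymmSubMarkov κ)
include hκ

lemma measurable_left (x : α) : Measurable (κ x) := hκ.measurable.of_uncurry_left

lemma integrable_left (x : α) : Integrable (κ x) := by
  refine ⟨(hκ.measurable_left x).aestronglyMeasurable, ?_⟩
  rw [hasFiniteIntegral_iff_ofReal (.of_forall (hκ.nonneg x))]
  exact (hκ.mass_le x).trans_lt one_lt_top

lemma integrable_mul {x : α} {B : ℝ} (hB : ∀ z, κ x z ≤ B) {h : α → ℂ} (hh : Integrable h) :
    Integrable (fun z => (κ x z : ℂ) * h z) := by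
  refine hh.bdd_mul (c := B)
    (Complex.measurable_ofReal.comp (hκ.measurable_left x)).aestronglyMeasurable (.of_forall ?_)
  intro z
  simpa only [Function.comp_apply, Complex.norm_real, Real.norm_of_nonneg (hκ.nonneg x z)]
    using hB z

lemma enorm_kernelOp_le (h : α → ℂ) (x : α) :
    ‖kernelOp κ h x‖ₑ ≤ ∫⁻ z, ENNReal.ofReal (κ x z) * ‖h z‖ₑ := by
  refine (enorm_integral_le_lintegral_enorm _).trans_eq ?_
  simp only [enorm_ofReal_mul (hκ.nonneg _ _)]

variable [SFinite (volume : Measure α)] {h : α → ℂ}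

lemma measurable_kernelOp (hm : Measurable h) : Measurable (kernelOp κ h) := by
  have : Measurable (Function.uncurry fun x z : α => (κ x z : ℂ) * h z) :=
    (Complex.measurable_ofReal.comp hκ.measurable).mul (hm.comp measurable_snd)
  exact this.stronglyMeasurable.integral_prod_right.measurable

lemma lintegral_lintegral_le {g : α → ℝ≥0∞} (hg : Measurable g) :
    ∫⁻ x, ∫⁻ z, ENNReal.ofReal (κ x z) * g z ≤ ∫⁻ z, g z := by
  have := lintegral_le_of_schur (μ := volume) (ν := volume) (b := 1)
    (k := fun x z => ENNReal.ofReal (κ x z)) hκ.measurable.ennreal_ofReal hg (fun _ => le_rfl)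
    (fun y => by simpa only [hκ.symm _ y] using hκ.mass_le y)
  rwa [one_mul] at this

lemma integrable_prod (hm : Measurable h) (hh : Integrable h) :
    Integrable (fun p : α × α => (κ p.1 p.2 : ℂ) * h p.2) (volume.prod volume) := by
  have hmeas : Measurable (fun p : α × α => (κ p.1 p.2 : ℂ) * h p.2) :=
    (Complex.measurable_ofReal.comp hκ.measurable).mul (hm.comp measurable_snd)
  refine ⟨hmeas.aestronglyMeasurable, ?_⟩
  rw [hasFiniteIntegral_iff_enorm, lintegral_prod _ hmeas.enorm.aemeasurable]
  simp only [enorm_ofReal_mul (hκ.nonneg _ _)]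
  exact (hκ.lintegral_lintegral_le hm.enorm).trans_lt hh.2

lemma integrable_kernelOp (hm : Measurable h) (hh : Integrable h) : Integrable (kernelOp κ h) :=
  (hκ.integrable_prod hm hh).integral_prod_left

lemma integral_mul_kernelOp (hm : Measurable h) (hh : Integrable h) {W : α → ℂ}
    (hW : Measurable W) {B : ℝ} (hB : ∀ x, ‖W x‖ ≤ B) :
    ∫ x, W x * kernelOp κ h x = ∫ z, kernelOp κ W z * h z := by
  have hInt : Integrable (fun p : α × α => W p.1 * ((κ p.1 p.2 : ℂ) * h p.2))
      (volume.prod volume) :=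
    (hκ.integrable_prod hm hh).bdd_mul (hW.comp measurable_fst).aestronglyMeasurable
      (.of_forall fun p => hB p.1)
  calc ∫ x, W x * kernelOp κ h x = ∫ x, ∫ z, W x * ((κ x z : ℂ) * h z) := by
        simp only [kernelOp, integral_const_mul]
    _ = ∫ z, ∫ x, W x * ((κ x z : ℂ) * h z) := integral_integral_swap hInt
    _ = ∫ z, kernelOp κ W z * h z := by
        congr 1 with z
        rw [kernelOp, ← integral_mul_const]
        congr 1 with x
        rw [hκ.symm x z]
        ring

end IsSymmSubMarkov

end SubMarkov

/-! ### The dyadic filtration -/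

section Dyadic

/-- The index of the dyadic interval `[m / 2ⁿ, (m + 1) / 2ⁿ)` of generation `n` containing `x`.
Two points lie in the same interval iff their indices agree, and a function is constant on the
intervals of generation `n` iff it factors through `dyadicIndex n`. -/
def dyadicIndex (n : ℤ) (x : ℝ) : ℤ := ⌊(2 : ℝ) ^ n * x⌋

/-- The kernel of the conditional expectation on the dyadic intervals of generation `n`. -/
def dyadicKernel (n : ℤ) (x z : ℝ) : ℝ := if dyadicIndex n x = dyadicIndex n z then 2 ^ n else 0

variable {n : ℤ} {x z : ℝ}

lemma measurable_dyadicIndex (n : ℤ) : Measurable (dyadicIndex n) :=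
  Int.measurable_floor.comp (measurable_const.mul measurable_id)

lemma dyadicIndex_eq_iff {m : ℤ} :
    m = dyadicIndex n z ↔ z ∈ Set.Ico ((m : ℝ) / 2 ^ n) ((m + 1) / 2 ^ n) := by
  have hn : (0 : ℝ) < 2 ^ n := by positivity
  rw [dyadicIndex, eq_comm, Int.floor_eq_iff, Set.mem_Ico, div_le_iff₀ hn, lt_div_iff₀ hn,
    mul_comm]

lemma two_zpow_mul_abs_sub_le_one (h : dyadicIndex n x = dyadicIndex n z) :
    (2 : ℝ) ^ n * |x - z| ≤ 1 := by
  have hn : (0 : ℝ) < 2 ^ n := by positivity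
  calc (2 : ℝ) ^ n * |x - z| = |2 ^ n * x - 2 ^ n * z| := by
        rw [← mul_sub, abs_mul, abs_of_pos hn]
    _ ≤ 1 := (Int.abs_sub_lt_one_of_floor_eq_floor h).le

lemma two_zpow_mul_abs_dyadicIndex_div_sub_le_one (n : ℤ) (x : ℝ) :
    (2 : ℝ) ^ n * |dyadicIndex n x / 2 ^ n - x| ≤ 1 := by
  have hn : (0 : ℝ) < 2 ^ n := by positivity
  rw [← abs_of_pos hn, ← abs_mul, abs_of_pos hn, mul_sub, mul_div_cancel₀ _ hn.ne', abs_sub_comm]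
  exact (Int.abs_sub_lt_one_of_floor_eq_floor (by simp [dyadicIndex])).le

lemma two_zpow_mul_abs_dyadicIndex_add_one_div_sub_le_one (n : ℤ) (x : ℝ) :
    (2 : ℝ) ^ n * |(dyadicIndex n x + 1) / 2 ^ n - x| ≤ 1 := by
  have hn : (0 : ℝ) < 2 ^ n := by positivity
  have hfloor : (dyadicIndex n x : ℝ) ≤ 2 ^ n * x := Int.floor_le _
  have hlt : 2 ^ n * x < dyadicIndex n x + 1 := Int.lt_floor_add_one _
  rw [← abs_of_pos hn, ← abs_mul, abs_of_pos hn, mul_sub, mul_div_cancel₀ _ hn.ne',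
    abs_of_pos (sub_pos.2 hlt)]
  linarith

lemma dyadicIndex_eq_ediv_two (n : ℤ) (x : ℝ) : dyadicIndex n x = dyadicIndex (n + 1) x / 2 := by
  have h : (2 : ℝ) ^ n * x = 2 ^ (n + 1) * x / (2 : ℕ) := by
    rw [zpow_add_one₀ two_ne_zero]
    push_cast
    ring
  rw [dyadicIndex, h, Int.floor_div_natCast]
  rfl

lemma dyadicIndex_eq_of_le {n' : ℤ} (hn : n' ≤ n) (h : dyadicIndex n x = dyadicIndex n z) :
    dyadicIndex n' x = dyadicIndex n' z := by
  induction n', hn using Int.leInductionDown with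
  | base => exact h
  | pred m _ ih => simp only [dyadicIndex_eq_ediv_two (m - 1), sub_add_cancel, ih]

lemma dyadicKernel_nonneg (n : ℤ) (x z : ℝ) : 0 ≤ dyadicKernel n x z := by
  unfold dyadicKernel
  split_ifs <;> positivity

lemma dyadicKernel_le (n : ℤ) (x z : ℝ) : dyadicKernel n x z ≤ 2 ^ n := by
  unfold dyadicKernel
  split_ifs
  · exact le_rfl
  · positivity

lemma dyadicKernel_eq_indicator (n : ℤ) (x : ℝ) :
    dyadicKernel n x =
      (Set.Ico ((dyadicIndex n x : ℝ) / 2 ^ n) ((dyadicIndex n x + 1) / 2 ^ n)).indicator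
        fun _ => 2 ^ n := by
  ext z
  simp only [dyadicKernel, Set.indicator_apply, dyadicIndex_eq_iff]

lemma lintegral_dyadicKernel (n : ℤ) (x : ℝ) :
    ∫⁻ z, ENNReal.ofReal (dyadicKernel n x z) = 1 := by
  have hn : (0 : ℝ) < 2 ^ n := by positivity
  have key (I : Set ℝ) (z : ℝ) : ENNReal.ofReal (I.indicator (fun _ => (2 : ℝ) ^ n) z) =
      I.indicator (fun _ => ENNReal.ofReal (2 ^ n)) z := by
    by_cases hz : z ∈ I <;> simp [hz]
  simp only [dyadicKernel_eq_indicator, key]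
  rw [lintegral_indicator_const measurableSet_Ico, Real.volume_Ico, ← ENNReal.ofReal_mul hn.le,
    ENNReal.ofReal_eq_one]
  field_simp
  ring

lemma isSymmSubMarkov_dyadicKernel (n : ℤ) : IsSymmSubMarkov (dyadicKernel n) where
  measurable := Measurable.ite (measurableSet_eq_fun
    ((measurable_dyadicIndex n).comp measurable_fst)
    ((measurable_dyadicIndex n).comp measurable_snd)) measurable_const measurable_const
  nonneg := dyadicKernel_nonneg n
  symm x z := by simp only [dyadicKernel, eq_comm]
  mass_le x := (lintegral_dyadicKernel n x).le

lemma integral_dyadicKernel (n : ℤ) (x : ℝ) : ∫ z, dyadicKernel n x z = 1 := by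
  rw [integral_eq_lintegral_of_nonneg_ae (.of_forall (dyadicKernel_nonneg n x))
    ((isSymmSubMarkov_dyadicKernel n).measurable_left x).aestronglyMeasurable,
    lintegral_dyadicKernel, toReal_one]

lemma kernelOp_dyadicKernel_of_factorsThrough {W : ℝ → ℂ}
    (hW : W.FactorsThrough (dyadicIndex n)) : kernelOp (dyadicKernel n) W = W := by
  ext x
  have (z : ℝ) : (dyadicKernel n x z : ℂ) * W z = dyadicKernel n x z * W x := by
    by_cases hz : dyadicIndex n x = dyadicIndex n z
    · rw [hW hz]
    · simp [dyadicKernel, hz]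
  simp only [kernelOp, this, integral_mul_const, integral_complex_ofReal, integral_dyadicKernel,
    Complex.ofReal_one, one_mul]

lemma kernelOp_dyadicKernel_factorsThrough (n : ℤ) (h : ℝ → ℂ) :
    (kernelOp (dyadicKernel n) h).FactorsThrough (dyadicIndex n) := fun x z hxz => by
  simp only [kernelOp, dyadicKernel, hxz]

lemma integral_mul_kernelOp_sub_eq_zero {W h : ℝ → ℂ} (hW : Measurable W)
    (hc : W.FactorsThrough (dyadicIndex n)) {B : ℝ} (hB : ∀ x, ‖W x‖ ≤ B) (hm : Measurable h)
    (hh : Integrable h) :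
    ∫ x, W x * (kernelOp (dyadicKernel (n + 1)) h x - kernelOp (dyadicKernel n) h x) = 0 := by
  have hfactors (m : ℤ) (hnm : n ≤ m) : W.FactorsThrough (dyadicIndex m) :=
    fun x z hxz => hc (dyadicIndex_eq_of_le hnm hxz)
  have hInt (m : ℤ) : Integrable fun x => W x * kernelOp (dyadicKernel m) h x :=
    ((isSymmSubMarkov_dyadicKernel m).integrable_kernelOp hm hh).bdd_mul hW.aestronglyMeasurable
      (.of_forall hB)
  have hself (m : ℤ) (hnm : n ≤ m) :
      ∫ x, W x * kernelOp (dyadicKernel m) h x = ∫ x, W x * h x := by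
    rw [(isSymmSubMarkov_dyadicKernel m).integral_mul_kernelOp hm hh hW hB,
      kernelOp_dyadicKernel_of_factorsThrough (hfactors m hnm)]
  simp only [mul_sub]
  rw [integral_sub (hInt _) (hInt _), hself n le_rfl, hself (n + 1) (by omega), sub_self]

lemma enorm_sub_kernelOp_dyadicKernel_le {F : ℝ → ℂ} (hF : Integrable F) {b : ℝ≥0∞}
    (hb : ∀ z, dyadicIndex n x = dyadicIndex n z → ‖F x - F z‖ₑ ≤ b) :
    ‖F x - kernelOp (dyadicKernel n) F x‖ₑ ≤ b := by
  have hκ := isSymmSubMarkov_dyadicKernel n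
  have hconst : Integrable fun z => (dyadicKernel n x z : ℂ) * F x :=
    ((hκ.integrable_left x).ofReal (𝕜 := ℂ)).mul_const _
  have hsub : F x - kernelOp (dyadicKernel n) F x =
      ∫ z, (dyadicKernel n x z : ℂ) * (F x - F z) := by
    simp only [mul_sub]
    rw [integral_sub hconst (hκ.integrable_mul (dyadicKernel_le n x) hF), integral_mul_const,
      integral_complex_ofReal, integral_dyadicKernel, Complex.ofReal_one, one_mul, kernelOp]
  calc ‖F x - kernelOp (dyadicKernel n) F x‖ₑ
      ≤ ∫⁻ z, ‖(dyadicKernel n x z : ℂ) * (F x - F z)‖ₑ :=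
        hsub ▸ enorm_integral_le_lintegral_enorm _
    _ ≤ ∫⁻ z, ENNReal.ofReal (dyadicKernel n x z) * b := by
        gcongr with z
        rw [enorm_ofReal_mul (dyadicKernel_nonneg _ _ _)]
        by_cases hz : dyadicIndex n x = dyadicIndex n z
        · gcongr
          exact hb z hz
        · simp [dyadicKernel, hz]
    _ = b := by
        rw [lintegral_mul_const _ (hκ.measurable_left x).ennreal_ofReal, lintegral_dyadicKernel,
          one_mul]

end Dyadic

/-! ### Littlewood–Paley families -/

section Bump

/-- The Poisson-type weight `(1 + t²)⁻¹` dominating the kernels of a Littlewood–Paley family. -/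
def bump (t : ℝ) : ℝ := (1 + t ^ 2)⁻¹

/-- The `L¹`-normalised dilate of `bump` living at scale `c⁻¹`. -/
def bumpAt (c t : ℝ) : ℝ := c * bump (c * t)

lemma bump_pos (t : ℝ) : 0 < bump t := by
  unfold bump
  positivity

lemma bump_le_one (t : ℝ) : bump t ≤ 1 :=
  inv_le_one_of_one_le₀ (by nlinarith [sq_nonneg t])

lemma bump_sq_le (t : ℝ) : bump t ^ 2 ≤ bump t :=
  pow_le_of_le_one (bump_pos t).le (bump_le_one t) two_ne_zero

lemma bump_le_three_mul {s t : ℝ} (h : |s - t| ≤ 1) : bump s ≤ 3 * bump t := by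
  have ⟨h₁, h₂⟩ := abs_le.1 h
  unfold bump
  rw [inv_le_iff_one_le_mul₀ (by positivity), mul_right_comm, ← div_eq_mul_inv,
    le_div_iff₀ (by positivity)]
  nlinarith [sq_nonneg (2 * s - t), sq_nonneg (s - 2 * t), sq_nonneg (s + t)]

lemma bump_le_bump_of_abs_le {s t : ℝ} (h : |s| ≤ |t|) : bump t ≤ bump s := by
  have := sq_le_sq.2 h
  exact inv_anti₀ (by positivity) (by linarith)

lemma continuous_bump : Continuous bump :=
  (continuous_const.add (continuous_pow 2)).inv₀ fun t => (by positivity : 1 + t ^ 2 ≠ 0)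

lemma continuous_bumpAt (c : ℝ) : Continuous (bumpAt c) :=
  continuous_const.mul (continuous_bump.comp (continuous_const_mul c))

lemma integrable_bump : Integrable bump := integrable_inv_one_add_sq

lemma integral_bump : ∫ t, bump t = Real.pi := integral_univ_inv_one_add_sq

variable {a c : ℝ}

lemma bumpAt_nonneg (hc : 0 ≤ c) (t : ℝ) : 0 ≤ bumpAt c t := mul_nonneg hc (bump_pos _).le

lemma bumpAt_le (hc : 0 ≤ c) (t : ℝ) : bumpAt c t ≤ c :=
  mul_le_of_le_one_right hc (bump_le_one _)

lemma lintegral_mul_bumpAt (ha : 0 ≤ a) (hc : 0 < c) :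
    ∫⁻ t, ENNReal.ofReal (a * bumpAt c t) = ENNReal.ofReal (a * Real.pi) := by
  have hInt : Integrable (fun t => a * bumpAt c t) :=
    ((integrable_bump.comp_mul_left' hc.ne').const_mul c).const_mul a
  rw [← ofReal_integral_eq_lintegral_ofReal hInt
    (.of_forall fun t => mul_nonneg ha (bumpAt_nonneg hc.le t))]
  simp only [bumpAt, integral_const_mul, Measure.integral_comp_mul_left bump, integral_bump,
    abs_of_pos (inv_pos.2 hc), smul_eq_mul]
  rw [mul_inv_cancel_left₀ hc.ne']

lemma lintegral_mul_bumpAt_sub_left (ha : 0 ≤ a) (hc : 0 < c) (x : ℝ) :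
    ∫⁻ y, ENNReal.ofReal (a * bumpAt c (x - y)) = ENNReal.ofReal (a * Real.pi) :=
  (lintegral_sub_left_eq_self (fun t => ENNReal.ofReal (a * bumpAt c t)) x).trans
    (lintegral_mul_bumpAt ha hc)

lemma lintegral_mul_bumpAt_sub_right (ha : 0 ≤ a) (hc : 0 < c) (y : ℝ) :
    ∫⁻ x, ENNReal.ofReal (a * bumpAt c (x - y)) = ENNReal.ofReal (a * Real.pi) :=
  (lintegral_sub_right_eq_self (fun t => ENNReal.ofReal (a * bumpAt c t)) y).trans
    (lintegral_mul_bumpAt ha hc)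

lemma measurable_ofReal_mul_bumpAt_sub (a c : ℝ) :
    Measurable (Function.uncurry fun x y : ℝ => ENNReal.ofReal (a * bumpAt c (x - y))) :=
  (measurable_const.mul ((continuous_bumpAt c).measurable.comp
    (measurable_fst.sub measurable_snd))).ennreal_ofReal

end Bump

/-- A family of kernels `K i` adapted to the scales `2⁻ⁱ`, with pointwise decay, Lipschitz
regularity and cancellation controlled by the single constant `A`. The Littlewood–Paley pieces
`2ⁱ φ(2ⁱ ·)` of a mean-zero Schwartz function are the motivating example. -/
structure IsLittlewoodPaleyFamily (A : ℝ) (K : ℤ → ℝ → ℂ) : Prop where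
  nonneg : 0 ≤ A
  continuous : ∀ i, Continuous (K i)
  norm_le : ∀ i t, ‖K i t‖ ≤ A * bumpAt (2 ^ i) t
  norm_sub_le : ∀ i s t, (2 : ℝ) ^ i * |s - t| ≤ 1 →
    ‖K i s - K i t‖ ≤ A * ((2 : ℝ) ^ i * |s - t|) * bumpAt (2 ^ i) t
  norm_intervalIntegral_le : ∀ i a b,
    ‖∫ t in a..b, K i t‖ ≤ A * (bump (2 ^ i * a) + bump (2 ^ i * b))

section Schwartz

lemma integral_eq_zero_of_lt_abs_of_fourier_ne_zero {φ : ℝ → ℂ} {c : ℝ} (hc : 0 ≤ c)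
    (hφ : ∀ ξ, 𝓕 φ ξ ≠ 0 → c < |ξ|) : ∫ x, φ x = 0 := by
  have h : 𝓕 φ 0 = 0 := by
    by_contra h
    exact (hφ 0 h).not_ge (abs_zero.trans_le hc)
  simpa [Real.fourier_eq] using h

variable (φ : SchwartzMap ℝ ℂ)

lemma exists_norm_iteratedDeriv_le_bump_sq (n : ℕ) :
    ∃ C, 0 ≤ C ∧ ∀ x : ℝ, ‖iteratedDeriv n φ x‖ ≤ C * bump x ^ 2 := by
  obtain ⟨C₀, hC₀, decay₀⟩ := φ.decay 0 n
  obtain ⟨C₄, hC₄, decay₄⟩ := φ.decay 4 n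
  refine ⟨2 * (C₀ + C₄), by positivity, fun x => ?_⟩
  have h₀ : ‖iteratedDeriv n φ x‖ ≤ C₀ := by
    simpa [norm_iteratedFDeriv_eq_norm_iteratedDeriv] using decay₀ x
  have h₄ : x ^ 4 * ‖iteratedDeriv n φ x‖ ≤ C₄ := by
    simpa only [norm_iteratedFDeriv_eq_norm_iteratedDeriv, Real.norm_eq_abs,
      (by decide : Even 4).pow_abs x] using decay₄ x
  have hpow : (1 + x ^ 2) ^ 2 ≤ 2 * (1 + x ^ 4) := by nlinarith [sq_nonneg (x ^ 2 - 1)]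
  rw [bump, inv_pow, ← div_eq_mul_inv, le_div_iff₀ (by positivity)]
  nlinarith [mul_le_mul_of_nonneg_left hpow (norm_nonneg (iteratedDeriv n φ x))]

lemma norm_setIntegral_le_of_le_bump_sq {g : ℝ → ℂ} (hg : Integrable g) {C : ℝ}
    (hC : 0 ≤ C) (h : ∀ x, ‖g x‖ ≤ C * bump x ^ 2) {t : ℝ} {S : Set ℝ} (hS : MeasurableSet S)
    (hSt : ∀ x ∈ S, |t| ≤ |x|) : ‖∫ x in S, g x‖ ≤ C * Real.pi * bump t := by
  calc ‖∫ x in S, g x‖ ≤ ∫ x in S, ‖g x‖ := norm_integral_le_integral_norm _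
    _ ≤ ∫ x in S, C * bump t * bump x := by
        refine setIntegral_mono_on hg.norm.integrableOn
          (integrable_bump.const_mul _).integrableOn hS fun x hx => (h x).trans ?_
        have := bump_pos x
        rw [sq, ← mul_assoc]
        gcongr
        exact bump_le_bump_of_abs_le (hSt x hx)
    _ ≤ ∫ x, C * bump t * bump x :=
        setIntegral_le_integral (integrable_bump.const_mul _) (.of_forall fun x =>
          mul_nonneg (mul_nonneg hC (bump_pos t).le) (bump_pos x).le)
    _ = C * Real.pi * bump t := by
        rw [integral_const_mul, integral_bump]
        ring

lemma norm_integral_Iic_le_bump {g : ℝ → ℂ} (hg : Integrable g) (h0 : ∫ x, g x = 0) {C : ℝ}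
    (hC : 0 ≤ C) (h : ∀ x, ‖g x‖ ≤ C * bump x ^ 2) (t : ℝ) :
    ‖∫ x in Set.Iic t, g x‖ ≤ C * Real.pi * bump t := by
  rcases le_total t 0 with ht | ht
  · refine norm_setIntegral_le_of_le_bump_sq hg hC h measurableSet_Iic fun x (hx : x ≤ t) => ?_
    rw [abs_of_nonpos ht, abs_of_nonpos (hx.trans ht)]
    linarith
  · have hcompl := integral_add_compl (measurableSet_Iic (a := t)) hg
    rw [h0, add_eq_zero_iff_eq_neg, Set.compl_Iic] at hcompl
    rw [hcompl, norm_neg]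
    refine norm_setIntegral_le_of_le_bump_sq hg hC h measurableSet_Ioi fun x (hx : t < x) => ?_
    rw [abs_of_nonneg ht, abs_of_nonneg (ht.trans hx.le)]
    exact hx.le

variable {φ}

lemma norm_sub_le_of_norm_deriv_le_bump {g : ℝ → ℂ} (hg : Differentiable ℝ g) {C : ℝ}
    (hC : 0 ≤ C) (h : ∀ x, ‖deriv g x‖ ≤ C * bump x ^ 2) {s t : ℝ} (hst : |s - t| ≤ 1) :
    ‖g s - g t‖ ≤ 3 * C * |s - t| * bump t := by
  refine (Convex.norm_image_sub_le_of_norm_deriv_le (C := 3 * C * bump t) (fun x _ => hg x) ?_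
    (convex_closedBall t 1) (by simp) hst).trans_eq (mul_right_comm _ _ _)
  intro x hx
  calc ‖deriv g x‖ ≤ C * bump x := (h x).trans (by gcongr; exact bump_sq_le x)
    _ ≤ C * (3 * bump t) := by gcongr; exact bump_le_three_mul hx
    _ = 3 * C * bump t := by ring

lemma norm_dilate (i : ℤ) (t : ℝ) : ‖dilate φ i t‖ = 2 ^ i * ‖φ (2 ^ i * t)‖ := by
  rw [dilate, norm_smul, Real.norm_of_nonneg (by positivity)]

lemma norm_dilate_sub_dilate (i : ℤ) (s t : ℝ) :
    ‖dilate φ i s - dilate φ i t‖ = 2 ^ i * ‖φ (2 ^ i * s) - φ (2 ^ i * t)‖ := by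
  rw [dilate, dilate, ← smul_sub, norm_smul, Real.norm_of_nonneg (by positivity)]

lemma intervalIntegral_dilate (i : ℤ) (a b : ℝ) :
    ∫ t in a..b, dilate φ i t = ∫ x in (2 ^ i * a)..(2 ^ i * b), φ x := by
  simp only [dilate, intervalIntegral.integral_smul, intervalIntegral.smul_integral_comp_mul_left]

lemma exists_isLittlewoodPaleyFamily_dilate (h0 : ∫ x, φ x = 0) :
    ∃ A, IsLittlewoodPaleyFamily A (dilate φ) := by
  obtain ⟨C₀, hC₀, hφ⟩ := exists_norm_iteratedDeriv_le_bump_sq φ 0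
  obtain ⟨C₁, hC₁, hφ'⟩ := exists_norm_iteratedDeriv_le_bump_sq φ 1
  simp only [iteratedDeriv_zero, iteratedDeriv_one] at hφ hφ'
  have hπ := mul_nonneg hC₀ Real.pi_pos.le
  set A := C₀ + 3 * C₁ + C₀ * Real.pi
  refine ⟨A, by positivity, fun i => ?_, fun i t => ?_, fun i s t hst => ?_, fun i a b => ?_⟩
  · exact (φ.continuous.comp (continuous_const_mul _)).const_smul ((2 : ℝ) ^ i)
  · calc ‖dilate φ i t‖ ≤ 2 ^ i * (A * bump (2 ^ i * t)) := by
          rw [norm_dilate]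
          gcongr
          refine (hφ _).trans ?_
          gcongr
          · linarith
          · exact bump_sq_le _
      _ = A * bumpAt (2 ^ i) t := by rw [bumpAt]; ring
  · have hscale : |2 ^ i * s - 2 ^ i * t| = 2 ^ i * |s - t| := by
      rw [← mul_sub, abs_mul, abs_of_pos (by positivity)]
    have hLip := norm_sub_le_of_norm_deriv_le_bump φ.differentiable hC₁ hφ' (hscale.trans_le hst)
    rw [hscale] at hLip
    calc ‖dilate φ i s - dilate φ i t‖ ≤ 2 ^ i * (A * (2 ^ i * |s - t|) * bump (2 ^ i * t)) := by
          rw [norm_dilate_sub_dilate]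
          gcongr
          refine hLip.trans ?_
          have := (bump_pos (2 ^ i * t)).le
          gcongr
          linarith
      _ = A * (2 ^ i * |s - t|) * bumpAt (2 ^ i) t := by rw [bumpAt]; ring
  · have hprim (u : ℝ) : ‖∫ x in Set.Iic u, φ x‖ ≤ A * bump u := by
      refine (norm_integral_Iic_le_bump φ.integrable h0 hC₀ hφ u).trans ?_
      have := (bump_pos u).le
      gcongr
      linarith
    rw [intervalIntegral_dilate, ← intervalIntegral.integral_Iic_sub_Iic
      φ.integrable.integrableOn φ.integrable.integrableOn, mul_add]
    exact (norm_sub_le _ _).trans ((add_le_add (hprim _) (hprim _)).trans_eq (add_comm _ _))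

end Schwartz

namespace IsLittlewoodPaleyFamily

variable {A : ℝ} {K : ℤ → ℝ → ℂ} (hK : IsLittlewoodPaleyFamily A K) {h : ℝ → ℂ}
include hK

lemma measurable_conv (i : ℤ) (hm : Measurable h) : Measurable (conv (K i) h) := by
  have : Measurable (Function.uncurry fun x y : ℝ => K i (x - y) * h y) :=
    ((hK.continuous i).measurable.comp (measurable_fst.sub measurable_snd)).mul
      (hm.comp measurable_snd)
  exact this.stronglyMeasurable.integral_prod_right.measurable

lemma norm_le_zpow (i : ℤ) (t : ℝ) : ‖K i t‖ ≤ A * 2 ^ i :=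
  (hK.norm_le i t).trans (mul_le_mul_of_nonneg_left (bumpAt_le (by positivity) t) hK.nonneg)

lemma integrable_conv_integrand (i : ℤ) (hi : Integrable h) (x : ℝ) :
    Integrable (fun y => K i (x - y) * h y) :=
  hi.bdd_mul ((hK.continuous i).comp (continuous_sub_left x)).aestronglyMeasurable
    (.of_forall fun _ => hK.norm_le_zpow i _)

lemma conv_add (i : ℤ) {g : ℝ → ℂ} (hi : Integrable h) (hg : Integrable g) (x : ℝ) :
    conv (K i) (h + g) x = conv (K i) h x + conv (K i) g x := by
  simp only [conv, Pi.add_apply, mul_add]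
  exact integral_add (hK.integrable_conv_integrand i hi x) (hK.integrable_conv_integrand i hg x)

lemma enorm_conv_le (i : ℤ) (h : ℝ → ℂ) (x : ℝ) :
    ‖conv (K i) h x‖ₑ ≤ ∫⁻ y, ENNReal.ofReal (A * bumpAt (2 ^ i) (x - y)) * ‖h y‖ₑ := by
  refine (enorm_integral_le_lintegral_enorm _).trans (lintegral_mono fun y => ?_)
  rw [enorm_mul]
  gcongr
  exact enorm_le_ofReal (hK.norm_le i _)

lemma lintegral_enorm_conv_le (i : ℤ) (hm : Measurable h) :
    ∫⁻ x, ‖conv (K i) h x‖ₑ ≤ ENNReal.ofReal (A * Real.pi) * ∫⁻ y, ‖h y‖ₑ :=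
  lintegral_le_of_schur (measurable_ofReal_mul_bumpAt_sub A (2 ^ i)) hm.enorm
    (hK.enorm_conv_le i h)
    fun y => (lintegral_mul_bumpAt_sub_right hK.nonneg (by positivity) y).le

lemma lintegral_enorm_conv_sq_le (i : ℤ) (hm : Measurable h) :
    ∫⁻ x, ‖conv (K i) h x‖ₑ ^ 2 ≤
      ENNReal.ofReal (A * Real.pi) * ENNReal.ofReal (A * Real.pi) * ∫⁻ y, ‖h y‖ₑ ^ 2 :=
  lintegral_sq_le_of_schur (measurable_ofReal_mul_bumpAt_sub A (2 ^ i)) hm.enorm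
    (hK.enorm_conv_le i h)
    (fun x => (lintegral_mul_bumpAt_sub_left hK.nonneg (by positivity) x).le)
    fun y => (lintegral_mul_bumpAt_sub_right hK.nonneg (by positivity) y).le

lemma integrable_conv (i : ℤ) (hm : Measurable h) (hi : Integrable h) :
    Integrable (conv (K i) h) :=
  ⟨(hK.measurable_conv i hm).aestronglyMeasurable,
    (hK.lintegral_enorm_conv_le i hm).trans_lt (mul_lt_top ofReal_lt_top hi.2)⟩

lemma enorm_conv_sub_conv_le {i n : ℤ} (hin : i ≤ n) (hi : Integrable h) {x z : ℝ}
    (hxz : dyadicIndex n x = dyadicIndex n z) :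
    ‖conv (K i) h x - conv (K i) h z‖ₑ ≤
      ∫⁻ y, ENNReal.ofReal (A * 2 ^ (i - n) * bumpAt (2 ^ i) (x - y)) * ‖h y‖ₑ := by
  have hclose : (2 : ℝ) ^ i * |z - x| ≤ 2 ^ (i - n) := by
    calc (2 : ℝ) ^ i * |z - x| = 2 ^ (i - n) * (2 ^ n * |x - z|) := by
          rw [← mul_assoc, ← zpow_add₀ two_ne_zero, sub_add_cancel, abs_sub_comm]
      _ ≤ 2 ^ (i - n) * 1 := by gcongr; exact two_zpow_mul_abs_sub_le_one hxz
      _ = 2 ^ (i - n) := mul_one _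
  have hpow : (2 : ℝ) ^ (i - n) ≤ 1 := zpow_le_one_of_nonpos₀ one_le_two (by omega)
  rw [conv, conv, ← integral_sub (hK.integrable_conv_integrand i hi x)
    (hK.integrable_conv_integrand i hi z)]
  refine (enorm_integral_le_lintegral_enorm _).trans (lintegral_mono fun y => ?_)
  rw [← sub_mul, enorm_mul]
  gcongr
  have hLip := hK.norm_sub_le i (z - y) (x - y)
  rw [sub_sub_sub_cancel_right, norm_sub_rev] at hLip
  refine enorm_le_ofReal ((hLip (hclose.trans hpow)).trans ?_)
  have := bumpAt_nonneg (c := (2 : ℝ) ^ i) (by positivity) (x - y)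
  have := hK.nonneg
  gcongr

lemma lintegral_enorm_conv_sub_kernelOp_sq_le {i n : ℤ} (hin : i ≤ n) (hm : Measurable h)
    (hi : Integrable h) :
    ∫⁻ x, ‖conv (K i) h x - kernelOp (dyadicKernel n) (conv (K i) h) x‖ₑ ^ 2 ≤
      ENNReal.ofReal (A * 2 ^ (i - n) * Real.pi) * ENNReal.ofReal (A * 2 ^ (i - n) * Real.pi) *
        ∫⁻ y, ‖h y‖ₑ ^ 2 := by
  have hA : 0 ≤ A * 2 ^ (i - n) := mul_nonneg hK.nonneg (by positivity)
  exact lintegral_sq_le_of_schur (measurable_ofReal_mul_bumpAt_sub _ (2 ^ i)) hm.enorm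
    (fun x => enorm_sub_kernelOp_dyadicKernel_le (hK.integrable_conv i hm hi)
      fun z hxz => hK.enorm_conv_sub_conv_le hin hi hxz)
    (fun x => (lintegral_mul_bumpAt_sub_left hA (by positivity) x).le)
    fun y => (lintegral_mul_bumpAt_sub_right hA (by positivity) y).le

lemma kernelOp_dyadicKernel_conv (i n : ℤ) (hi : Integrable h) (x : ℝ) :
    kernelOp (dyadicKernel n) (conv (K i) h) x =
      ∫ y, kernelOp (dyadicKernel n) (fun z => K i (z - y)) x * h y := by
  have hprod : Integrable (fun p : ℝ × ℝ => (dyadicKernel n x p.1 : ℂ) * h p.2)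
      (volume.prod volume) :=
    (((isSymmSubMarkov_dyadicKernel n).integrable_left x).ofReal (𝕜 := ℂ)).mul_prod hi
  have hInt : Integrable (fun p : ℝ × ℝ => (dyadicKernel n x p.1 : ℂ) * (K i (p.1 - p.2) * h p.2))
      (volume.prod volume) :=
    (hprod.bdd_mul ((hK.continuous i).comp continuous_sub).aestronglyMeasurable
      (.of_forall fun p => hK.norm_le_zpow i (p.1 - p.2))).congr (.of_forall fun p => by
        simp only [Function.comp_apply]; ring)
  calc kernelOp (dyadicKernel n) (conv (K i) h) x
      = ∫ z, ∫ y, (dyadicKernel n x z : ℂ) * (K i (z - y) * h y) := by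
        simp only [kernelOp, conv, integral_const_mul]
    _ = ∫ y, ∫ z, (dyadicKernel n x z : ℂ) * (K i (z - y) * h y) := integral_integral_swap hInt
    _ = ∫ y, kernelOp (dyadicKernel n) (fun z => K i (z - y)) x * h y := by
        simp only [kernelOp, ← integral_mul_const, mul_assoc]

lemma norm_kernelOp_dyadicKernel_sub_le (i n : ℤ) (x y : ℝ) :
    ‖kernelOp (dyadicKernel n) (fun z => K i (z - y)) x‖ ≤
      A * 2 ^ (n - i) * bumpAt (2 ^ i) (dyadicIndex n x / 2 ^ n - y) +
        A * 2 ^ (n - i) * bumpAt (2 ^ i) ((dyadicIndex n x + 1) / 2 ^ n - y) := by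
  set a : ℝ := dyadicIndex n x / 2 ^ n
  set b : ℝ := (dyadicIndex n x + 1) / 2 ^ n
  have hn : (0 : ℝ) < 2 ^ n := by positivity
  have hscale : (2 : ℝ) ^ n = 2 ^ (n - i) * 2 ^ i := by
    rw [← zpow_add₀ two_ne_zero, sub_add_cancel]
  have hkernel : kernelOp (dyadicKernel n) (fun z => K i (z - y)) x =
      (2 ^ n : ℝ) * ∫ t in (a - y)..(b - y), K i t := by
    have hab : a ≤ b := by
      simp only [a, b]
      gcongr
      linarith
    rw [← intervalIntegral.integral_comp_sub_right (fun t => K i t) y,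
      intervalIntegral.integral_of_le hab, ← integral_Ico_eq_integral_Ioc, ← integral_const_mul,
      ← integral_indicator measurableSet_Ico, kernelOp, dyadicKernel_eq_indicator]
    congr 1 with z
    simp only [Set.indicator_apply, a, b]
    split_ifs <;> simp
  rw [hkernel, norm_mul, Complex.norm_real, Real.norm_of_nonneg hn.le]
  calc 2 ^ n * ‖∫ t in (a - y)..(b - y), K i t‖
      ≤ 2 ^ n * (A * (bump (2 ^ i * (a - y)) + bump (2 ^ i * (b - y)))) := by
        gcongr
        exact hK.norm_intervalIntegral_le i _ _
    _ = A * 2 ^ (n - i) * bumpAt (2 ^ i) (a - y) + A * 2 ^ (n - i) * bumpAt (2 ^ i) (b - y) := by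
        rw [bumpAt, bumpAt, hscale]
        ring

lemma mul_bumpAt_sub_le {i n : ℤ} (hni : n ≤ i) {x u : ℝ} (hux : (2 : ℝ) ^ n * |u - x| ≤ 1)
    (y : ℝ) : A * 2 ^ (n - i) * bumpAt (2 ^ i) (u - y) ≤ 3 * A * bumpAt (2 ^ n) (x - y) := by
  have hn : (0 : ℝ) < 2 ^ n := by positivity
  have hA := hK.nonneg
  have hscale : (2 : ℝ) ^ n = 2 ^ (n - i) * 2 ^ i := by
    rw [← zpow_add₀ two_ne_zero, sub_add_cancel]
  calc A * 2 ^ (n - i) * bumpAt (2 ^ i) (u - y) = A * 2 ^ n * bump (2 ^ i * (u - y)) := by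
        rw [bumpAt, hscale]
        ring
    _ ≤ A * 2 ^ n * bump (2 ^ n * (u - y)) := by
        gcongr
        apply bump_le_bump_of_abs_le
        rw [abs_mul, abs_mul, abs_of_pos hn, abs_of_pos (by positivity : (0 : ℝ) < 2 ^ i)]
        gcongr
        norm_num
    _ ≤ A * 2 ^ n * (3 * bump (2 ^ n * (x - y))) := by
        gcongr
        apply bump_le_three_mul
        rwa [← mul_sub, sub_sub_sub_cancel_right, abs_mul, abs_of_pos hn]
    _ = 3 * A * bumpAt (2 ^ n) (x - y) := by
        rw [bumpAt]
        ring

lemma lintegral_sq_bumpAt_sub_le {i n : ℤ} (hni : n ≤ i) {u : ℝ → ℝ} (hu : Measurable u)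
    (hux : ∀ x, (2 : ℝ) ^ n * |u x - x| ≤ 1) (hm : Measurable h) :
    ∫⁻ x, (∫⁻ y, ENNReal.ofReal (A * 2 ^ (n - i) * bumpAt (2 ^ i) (u x - y)) * ‖h y‖ₑ) ^ 2 ≤
      ENNReal.ofReal (A * 2 ^ (n - i) * Real.pi) * ENNReal.ofReal (3 * A * Real.pi) *
        ∫⁻ y, ‖h y‖ₑ ^ 2 := by
  have hA := hK.nonneg
  have hk : Measurable (Function.uncurry fun x y : ℝ =>
      ENNReal.ofReal (A * 2 ^ (n - i) * bumpAt (2 ^ i) (u x - y))) :=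
    (((continuous_bumpAt (2 ^ i)).measurable.comp
      ((hu.comp measurable_fst).sub measurable_snd)).const_mul _).ennreal_ofReal
  refine lintegral_sq_le_of_schur hk hm.enorm (fun _ => le_rfl)
    (fun x => (lintegral_mul_bumpAt_sub_left (by positivity) (by positivity) (u x)).le)
    fun y => ?_
  calc ∫⁻ x, ENNReal.ofReal (A * 2 ^ (n - i) * bumpAt (2 ^ i) (u x - y))
      ≤ ∫⁻ x, ENNReal.ofReal (3 * A * bumpAt (2 ^ n) (x - y)) :=
        lintegral_mono fun x => ENNReal.ofReal_le_ofReal (hK.mul_bumpAt_sub_le hni (hux x) y)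
    _ = ENNReal.ofReal (3 * A * Real.pi) :=
        lintegral_mul_bumpAt_sub_right (by positivity) (by positivity) y

lemma enorm_kernelOp_dyadicKernel_conv_le (i n : ℤ) (hm : Measurable h) (hi : Integrable h)
    (x : ℝ) :
    ‖kernelOp (dyadicKernel n) (conv (K i) h) x‖ₑ ≤
      (∫⁻ y, ENNReal.ofReal (A * 2 ^ (n - i) *
        bumpAt (2 ^ i) (dyadicIndex n x / 2 ^ n - y)) * ‖h y‖ₑ) +
      ∫⁻ y, ENNReal.ofReal (A * 2 ^ (n - i) *
        bumpAt (2 ^ i) ((dyadicIndex n x + 1) / 2 ^ n - y)) * ‖h y‖ₑ := by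
  have hA : 0 ≤ A * 2 ^ (n - i) := mul_nonneg hK.nonneg (by positivity)
  rw [hK.kernelOp_dyadicKernel_conv i n hi, ← lintegral_add_left']
  · refine (enorm_integral_le_lintegral_enorm _).trans (lintegral_mono fun y => ?_)
    rw [enorm_mul, ← add_mul, ← ENNReal.ofReal_add
      (mul_nonneg hA (bumpAt_nonneg (by positivity) _))
      (mul_nonneg hA (bumpAt_nonneg (by positivity) _))]
    gcongr
    exact enorm_le_ofReal (hK.norm_kernelOp_dyadicKernel_sub_le i n x y)
  · exact ((measurable_ofReal_mul_bumpAt_sub _ (2 ^ i)).of_uncurry_left.mul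
      hm.enorm).aemeasurable

lemma lintegral_enorm_kernelOp_conv_sq_le {i n : ℤ} (hni : n ≤ i) (hm : Measurable h)
    (hi : Integrable h) :
    ∫⁻ x, ‖kernelOp (dyadicKernel n) (conv (K i) h) x‖ₑ ^ 2 ≤
      4 * (ENNReal.ofReal (A * 2 ^ (n - i) * Real.pi) * ENNReal.ofReal (3 * A * Real.pi) *
        ∫⁻ y, ‖h y‖ₑ ^ 2) := by
  set a : ℝ → ℝ := fun x => dyadicIndex n x / 2 ^ n
  set b : ℝ → ℝ := fun x => (dyadicIndex n x + 1) / 2 ^ n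
  have hindex : Measurable fun x => (dyadicIndex n x : ℝ) :=
    measurable_from_top.comp (measurable_dyadicIndex n)
  have ha : Measurable a := hindex.div_const _
  have hb : Measurable b := (hindex.add_const 1).div_const _
  set T : (ℝ → ℝ) → ℝ → ℝ≥0∞ := fun u x =>
    ∫⁻ y, ENNReal.ofReal (A * 2 ^ (n - i) * bumpAt (2 ^ i) (u x - y)) * ‖h y‖ₑ
  have hTa : Measurable fun x => T a x ^ 2 :=
    (((measurable_ofReal_mul_bumpAt_sub (A * 2 ^ (n - i)) (2 ^ i)).mul
      (hm.enorm.comp measurable_snd)).lintegral_prod_right'.comp ha).pow_const 2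
  calc ∫⁻ x, ‖kernelOp (dyadicKernel n) (conv (K i) h) x‖ₑ ^ 2
      ≤ ∫⁻ x, 2 * (T a x ^ 2 + T b x ^ 2) := by
        gcongr with x
        exact (pow_le_pow_left' (hK.enorm_kernelOp_dyadicKernel_conv_le i n hm hi x) 2).trans
          (add_sq_le_two_mul _ _)
    _ = 2 * ((∫⁻ x, T a x ^ 2) + ∫⁻ x, T b x ^ 2) := by
        rw [lintegral_const_mul' _ _ ofNat_ne_top, lintegral_add_left hTa]
    _ ≤ 2 * (ENNReal.ofReal (A * 2 ^ (n - i) * Real.pi) * ENNReal.ofReal (3 * A * Real.pi) *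
          (∫⁻ y, ‖h y‖ₑ ^ 2) + ENNReal.ofReal (A * 2 ^ (n - i) * Real.pi) *
          ENNReal.ofReal (3 * A * Real.pi) * ∫⁻ y, ‖h y‖ₑ ^ 2) := by
        gcongr
        · exact hK.lintegral_sq_bumpAt_sub_le hni ha
            (two_zpow_mul_abs_dyadicIndex_div_sub_le_one n) hm
        · exact hK.lintegral_sq_bumpAt_sub_le hni hb
            (two_zpow_mul_abs_dyadicIndex_add_one_div_sub_le_one n) hm
    _ = _ := by ring

end IsLittlewoodPaleyFamily

/-! ### Almost orthogonality across scales -/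

section AlmostOrthogonal

lemma tsum_ofReal_pow_natAbs_sub {β : ℝ} (hβ₀ : 0 ≤ β) (hβ₁ : β < 1) (m : ℤ) :
    ∑' j : ℤ, ENNReal.ofReal (β ^ (j - m).natAbs) = ENNReal.ofReal ((1 + β) / (1 - β)) := by
  have hsum : HasSum (fun j : ℤ => β ^ j.natAbs) ((1 - β)⁻¹ + (1 - β)⁻¹ * β) := by
    have hneg (k : ℕ) : β ^ (-((k : ℤ) + 1)).natAbs = β ^ k * β := pow_succ β k
    refine HasSum.of_nat_of_neg_add_one (hasSum_geometric_of_lt_one hβ₀ hβ₁) ?_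
    simpa only [hneg] using (hasSum_geometric_of_lt_one hβ₀ hβ₁).mul_right β
  have hne : 1 - β ≠ 0 := by linarith
  calc ∑' j : ℤ, ENNReal.ofReal (β ^ (j - m).natAbs) = ∑' j : ℤ, ENNReal.ofReal (β ^ j.natAbs) :=
        (Equiv.subRight m).tsum_eq fun j : ℤ => ENNReal.ofReal (β ^ j.natAbs)
    _ = ENNReal.ofReal ((1 + β) / (1 - β)) := by
        rw [← ENNReal.ofReal_tsum_of_nonneg (fun _ => by positivity) hsum.summable, hsum.tsum_eq]
        congr 1
        field_simp

lemma sum_ofReal_pow_natAbs_sub_le {β : ℝ} (hβ₀ : 0 ≤ β) (hβ₁ : β < 1) (s : Finset ℤ) (m : ℤ) :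
    ∑ j ∈ s, ENNReal.ofReal (β ^ (j - m).natAbs) ≤ ENNReal.ofReal ((1 + β) / (1 - β)) :=
  (ENNReal.sum_le_tsum s).trans_eq (tsum_ofReal_pow_natAbs_sub hβ₀ hβ₁ m)

variable {α : Type*} [MeasurableSpace α] {μ : Measure α}

lemma eLpNorm_two_sq (f : α → ℂ) : eLpNorm f 2 μ ^ 2 = ∫⁻ x, ‖f x‖ₑ ^ 2 ∂μ := by
  simpa using eLpNorm_nnreal_pow_eq_lintegral (p := 2) (μ := μ) (f := f) two_ne_zero

lemma sum_lintegral_enorm_sum_sq_le (I J : Finset ℤ) {q : ℤ → ℤ → α → ℂ} {D : ℝ≥0∞}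
    {b : ℤ → ℝ≥0∞} (hq : ∀ n i, AEStronglyMeasurable (q n i) μ)
    (h : ∀ n i, ∫⁻ x, ‖q n i x‖ₑ ^ 2 ∂μ ≤ D * ENNReal.ofReal ((1 / 2) ^ (n - i).natAbs) * b i) :
    ∑ n ∈ J, ∫⁻ x, ‖∑ i ∈ I, q n i x‖ₑ ^ 2 ∂μ ≤ 49 * (D * ∑ i ∈ I, b i) := by
  have hsum (i : ℤ) (s : Finset ℤ) : ∑ n ∈ s, ENNReal.ofReal ((3 / 4) ^ (n - i).natAbs) ≤ 7 := by
    convert sum_ofReal_pow_natAbs_sub_le (β := 3 / 4) (by norm_num) (by norm_num) s i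
    norm_num
  have hnorm (n i : ℤ) : eLpNorm (q n i) 2 μ ≤
      ENNReal.ofReal ((3 / 4) ^ (n - i).natAbs) * (D * b i) ^ (1 / 2 : ℝ) := by
    refine (ENNReal.pow_le_pow_left_iff two_ne_zero).1 ?_
    calc eLpNorm (q n i) 2 μ ^ 2 ≤ D * ENNReal.ofReal ((1 / 2) ^ (n - i).natAbs) * b i :=
          (eLpNorm_two_sq _).trans_le (h n i)
      _ ≤ D * ENNReal.ofReal (((3 / 4) ^ (n - i).natAbs) ^ 2) * b i := by
          rw [pow_right_comm]
          gcongr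
          norm_num
      _ = _ := by
          rw [mul_pow, ← ENNReal.rpow_natCast (_ ^ (1 / 2 : ℝ)), ← ENNReal.rpow_mul,
            ENNReal.ofReal_pow (by positivity)]
          norm_num
          ring
  have schur := lintegral_sq_le_of_schur (μ := .restrict .count (J : Set ℤ))
    (ν := .restrict .count (I : Set ℤ)) (T := fun n => eLpNorm (∑ i ∈ I, q n i) 2 μ)
    (k := fun n i => ENNReal.ofReal ((3 / 4) ^ (n - i).natAbs))
    (g := fun i => (D * b i) ^ (1 / 2 : ℝ)) (a := 7) (b := 7) .of_discrete .of_discrete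
  simp only [lintegral_finset, Measure.count_singleton, mul_one, eLpNorm_two_sq,
    Finset.sum_apply] at schur
  refine (schur (fun n => ?_) (fun n => ?_) (hsum · J)).trans_eq ?_
  · exact (eLpNorm_sum_le (fun i _ => hq n i) one_le_two).trans
      (Finset.sum_le_sum fun i _ => hnorm n i)
  · simpa only [← Int.natAbs_neg (n - _), neg_sub] using hsum n I
  · simp only [← ENNReal.rpow_mul_natCast, Finset.mul_sum]
    norm_num

end AlmostOrthogonal

/-- The error made when the sharp cutoff `i ≤ n` of the `i`-th convolution is replaced by its
conditional expectation on the dyadic intervals of generation `n`. -/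
def truncationError (K : ℤ → ℝ → ℂ) (n i : ℤ) (h : ℝ → ℂ) (x : ℝ) : ℂ :=
  (if i ≤ n then conv (K i) h x else 0) - kernelOp (dyadicKernel n) (conv (K i) h) x

namespace IsLittlewoodPaleyFamily

variable {A : ℝ} {K : ℤ → ℝ → ℂ} (hK : IsLittlewoodPaleyFamily A K) {h : ℝ → ℂ}
include hK

lemma measurable_truncationError (n i : ℤ) (hm : Measurable h) :
    Measurable (truncationError K n i h) := by
  have hc := hK.measurable_conv i hm
  have hE := (isSymmSubMarkov_dyadicKernel n).measurable_kernelOp hc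
  unfold truncationError
  split_ifs
  · exact hc.sub hE
  · exact measurable_const.sub hE

lemma lintegral_enorm_truncationError_sq_le (n i : ℤ) (hm : Measurable h) (hi : Integrable h) :
    ∫⁻ x, ‖truncationError K n i h x‖ₑ ^ 2 ≤
      ENNReal.ofReal (12 * (A * Real.pi) ^ 2) * ENNReal.ofReal ((1 / 2) ^ (n - i).natAbs) *
        ∫⁻ y, ‖h y‖ₑ ^ 2 := by
  have hAπ := mul_nonneg hK.nonneg Real.pi_pos.le
  have hpow {k : ℤ} (hk : 0 ≤ k) : (2 : ℝ) ^ (-k) = (1 / 2) ^ k.natAbs := by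
    lift k to ℕ using hk
    simp
  rw [← ENNReal.ofReal_mul (by positivity)]
  rcases le_or_gt i n with hin | hin
  · simp only [truncationError, hin, if_true]
    refine (hK.lintegral_enorm_conv_sub_kernelOp_sq_le hin hm hi).trans ?_
    rw [← neg_sub n i, hpow (by omega), mul_right_comm A, ← ENNReal.ofReal_mul (by positivity)]
    refine mul_le_mul_left (ENNReal.ofReal_le_ofReal ?_) _
    set p : ℝ := (1 / 2) ^ (n - i).natAbs
    have : 0 ≤ p := by positivity
    have hp₁ : p ≤ 1 := pow_le_one₀ (by norm_num) (by norm_num)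
    calc A * Real.pi * p * (A * Real.pi * p) = (A * Real.pi) ^ 2 * (p * p) := by ring
      _ ≤ (12 * (A * Real.pi) ^ 2) * (1 * p) := by gcongr; linarith [sq_nonneg (A * Real.pi)]
      _ = 12 * (A * Real.pi) ^ 2 * p := by ring
  · simp only [truncationError, hin.not_ge, if_false, zero_sub, enorm_neg]
    refine (hK.lintegral_enorm_kernelOp_conv_sq_le hin.le hm hi).trans_eq ?_
    rw [← neg_sub i n, hpow (by omega), Int.natAbs_neg, ← mul_assoc,
      ← ENNReal.ofReal_mul (by have := hK.nonneg; positivity), ← ENNReal.ofReal_ofNat 4,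
      ← ENNReal.ofReal_mul (by norm_num)]
    congr 2
    ring

lemma sum_lintegral_enorm_sum_truncationError_sq_le (I J : Finset ℤ) {u : ℤ → ℝ → ℂ}
    (hm : ∀ i, Measurable (u i)) (hi : ∀ i, Integrable (u i)) :
    ∑ n ∈ J, ∫⁻ x, ‖∑ i ∈ I, truncationError K n i (u i) x‖ₑ ^ 2 ≤
      49 * (ENNReal.ofReal (12 * (A * Real.pi) ^ 2) * ∑ i ∈ I, ∫⁻ y, ‖u i y‖ₑ ^ 2) :=
  sum_lintegral_enorm_sum_sq_le I J
    (fun n i => (hK.measurable_truncationError n i (hm i)).aestronglyMeasurable)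
    fun n i => hK.lintegral_enorm_truncationError_sq_le n i (hm i) (hi i)

end IsLittlewoodPaleyFamily

/-! ### Variation over blocks -/

/-- The largest value of `∑ₗ Φ(∑_{nₗ < i ≤ nₗ₊₁} aᵢ)` over all finite chains
`s ≤ n₀ ≤ n₁ ≤ ⋯ ≤ nₖ ≤ e`. It dominates every choice of jump points at once, and since the chains
are countable in number it stays measurable when `a` depends on a parameter. -/
def blockVariation (Φ : ℂ → ℝ≥0∞) (a : ℤ → ℂ) (s e : ℤ) : ℝ≥0∞ :=
  ⨆ (k : ℕ) (n : {n : Fin (k + 1) → ℤ // Monotone n ∧ s ≤ n 0 ∧ n (Fin.last k) ≤ e}),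
    ∑ l : Fin k, Φ (∑ i ∈ Finset.Ioc (n.1 l.castSucc) (n.1 l.succ), a i)

section BlockVariation

variable {Φ : ℂ → ℝ≥0∞} {a : ℤ → ℂ} {s e : ℤ}

lemma blockVariation_le {b : ℝ≥0∞}
    (h : ∀ (k : ℕ) (n : ℕ → ℤ), Monotone n → s ≤ n 0 → n k ≤ e →
      ∑ l ∈ Finset.range k, Φ (∑ i ∈ Finset.Ioc (n l) (n (l + 1)), a i) ≤ b) :
    blockVariation Φ a s e ≤ b := by
  refine iSup₂_le fun k ⟨n, hn, hs, he⟩ => ?_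
  have := h k (fun l => n ⟨min l k, by omega⟩)
    (fun p q hpq => hn (Fin.mk_le_mk.2 (min_le_min_right k hpq))) (by simpa using hs)
    (by simpa [Fin.last] using he)
  rw [Finset.sum_range] at this
  have hleft (l : Fin k) : (⟨min l k, by omega⟩ : Fin (k + 1)) = l.castSucc :=
    Fin.ext (min_eq_left l.2.le)
  have hright (l : Fin k) : (⟨min (l + 1) k, by omega⟩ : Fin (k + 1)) = l.succ :=
    Fin.ext (min_eq_left l.2)
  simpa only [hleft, hright] using this

lemma le_blockVariation {k : ℕ} {n : ℕ → ℤ} (hn : Monotone n) (hs : s ≤ n 0) (he : n k ≤ e) :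
    ∑ l ∈ Finset.range k, Φ (∑ i ∈ Finset.Ioc (n l) (n (l + 1)), a i) ≤
      blockVariation Φ a s e := by
  rw [Finset.sum_range]
  exact le_iSup₂_of_le k ⟨fun l => n l, fun p q hpq => hn hpq, hs, he⟩ le_rfl

lemma blockVariation_le_of_superadditive {b : ℤ → ℝ≥0∞}
    (h : ∀ p q, s ≤ p → p ≤ q → q ≤ e → Φ (∑ i ∈ Finset.Ioc p q, a i) + b p ≤ b q) :
    blockVariation Φ a s e ≤ b e := by
  refine blockVariation_le fun k n hn hs he => ?_
  have telescope (j : ℕ) (hj : j ≤ k) :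
      ∑ l ∈ Finset.range j, Φ (∑ i ∈ Finset.Ioc (n l) (n (l + 1)), a i) ≤ b (n j) := by
    induction j with
    | zero => simp
    | succ j ih =>
      rw [Finset.sum_range_succ, add_comm]
      exact (add_le_add_right (ih (by omega)) _).trans
        (h _ _ (hs.trans (hn j.zero_le)) (hn j.le_succ) ((hn hj).trans he))
  exact (telescope k le_rfl).trans
    (le_add_self.trans (h _ e (hs.trans (hn k.zero_le)) he le_rfl))

lemma blockVariation_mono_window {s' e' : ℤ} (hs : s' ≤ s) (he : e ≤ e') :
    blockVariation Φ a s e ≤ blockVariation Φ a s' e' :=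
  blockVariation_le fun _ _ hn hsn hne => le_blockVariation hn (hs.trans hsn) (hne.trans he)

lemma exists_lt_blockVariation_of_lt_tsum {n : ℕ → ℤ} (hn : ∀ k, n k ≤ n (k + 1)) {b : ℝ≥0∞}
    (h : b < ∑' k, Φ (∑ i ∈ Finset.Ioc (n k) (n (k + 1)), a i)) :
    ∃ M : ℕ, b < blockVariation Φ a (-M) M := by
  rw [ENNReal.tsum_eq_iSup_nat, lt_iSup_iff] at h
  obtain ⟨k, hk⟩ := h
  exact ⟨(n 0).natAbs + (n k).natAbs, hk.trans_le <|
    le_blockVariation (monotone_nat_of_le_succ hn) (by lia) (by lia)⟩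

lemma measurable_blockVariation {α : Type*} [MeasurableSpace α] {Φ : α → ℂ → ℝ≥0∞} {a : ℤ → α → ℂ}
    (hΦ : Measurable fun p : α × ℂ => Φ p.1 p.2) (ha : ∀ i, Measurable (a i)) :
    Measurable fun x => blockVariation (Φ x) (fun i => a i x) s e :=
  .iSup fun _ => .iSup fun n => Finset.measurable_fun_sum _ fun l _ => by
    have hsum := Finset.measurable_fun_sum (Finset.Ioc (n.1 l.castSucc) (n.1 l.succ))
      fun i _ => ha i
    exact hΦ.comp (measurable_id.prodMk hsum)

end BlockVariation

/-! ### Greedy jump counting -/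

/-- The value of `e` at its last greedy jump up to time `t`: a jump is made whenever `e` has moved
by at least `c` away from the current anchor. -/
def greedyAnchor (c : ℝ) (e : ℕ → ℂ) : ℕ → ℂ
  | 0 => e 0
  | t + 1 => if c ≤ ‖e (t + 1) - greedyAnchor c e t‖ then e (t + 1) else greedyAnchor c e t

/-- The number of greedy `c`-jumps of `e` up to time `t`. -/
def greedyCount (c : ℝ) (e : ℕ → ℂ) (t : ℕ) : ℕ :=
  ∑ j ∈ Finset.range t, if c ≤ ‖e (j + 1) - greedyAnchor c e j‖ then 1 else 0

/-- The conjugated displacement of `e` from its anchor: the multiplier of the martingale transform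
in the potential estimate for `greedyCount`. -/
def greedyOffset (c : ℝ) (e : ℕ → ℂ) (t : ℕ) : ℂ := starRingEnd ℂ (e t - greedyAnchor c e t)

section Greedy

variable {c : ℝ} {e : ℕ → ℂ}

lemma greedyCount_succ (c : ℝ) (e : ℕ → ℂ) (t : ℕ) : greedyCount c e (t + 1) =
    greedyCount c e t + if c ≤ ‖e (t + 1) - greedyAnchor c e t‖ then 1 else 0 :=
  Finset.sum_range_succ _ t

lemma monotone_greedyCount (c : ℝ) (e : ℕ → ℂ) : Monotone (greedyCount c e) :=
  monotone_nat_of_le_succ fun t => (greedyCount_succ c e t).symm ▸ Nat.le_add_right _ _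

lemma norm_sub_greedyAnchor_lt (hc : 0 < c) (e : ℕ → ℂ) (t : ℕ) :
    ‖e t - greedyAnchor c e t‖ < c := by
  cases t with
  | zero => simpa [greedyAnchor] using hc
  | succ t =>
    rw [greedyAnchor]
    split_ifs with h
    · simpa using hc
    · exact not_le.1 h

lemma greedyAnchor_eq_of_greedyCount_eq {p q : ℕ} (hpq : p ≤ q)
    (h : greedyCount c e q = greedyCount c e p) : greedyAnchor c e q = greedyAnchor c e p := by
  induction q, hpq using Nat.le_induction with
  | base => rfl
  | succ q hq ih =>
    have hmono := monotone_greedyCount c e hq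
    rw [greedyCount_succ] at h
    rw [greedyAnchor]
    split_ifs at h ⊢
    · omega
    · exact ih h

lemma greedyCount_lt_of_le_norm_sub (hc : 0 < c) {p q : ℕ} (hpq : p ≤ q)
    (h : 2 * c ≤ ‖e q - e p‖) : greedyCount c e p < greedyCount c e q := by
  refine (monotone_greedyCount c e hpq).lt_of_ne fun heq => ?_
  have hp := norm_sub_greedyAnchor_lt hc e p
  have hq := norm_sub_greedyAnchor_lt hc e q
  rw [greedyAnchor_eq_of_greedyCount_eq hpq heq.symm] at hq
  have := norm_sub_le (e q - greedyAnchor c e p) (e p - greedyAnchor c e p)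
  rw [sub_sub_sub_cancel_right] at this
  linarith

lemma norm_greedyOffset_le (hc : 0 < c) (e : ℕ → ℂ) (t : ℕ) : ‖greedyOffset c e t‖ ≤ c := by
  simpa only [greedyOffset, RCLike.norm_conj] using (norm_sub_greedyAnchor_lt hc e t).le

-- The potential `‖e t - anchor‖²` absorbs the square of each step up to a martingale transform,
-- and drops by at least `c²` at each jump.
lemma sq_mul_greedyCount_add_le (hc : 0 ≤ c) (e : ℕ → ℂ) (T : ℕ) :
    c ^ 2 * greedyCount c e T + ‖e T - greedyAnchor c e T‖ ^ 2 ≤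
      ∑ t ∈ Finset.range T, (2 * (greedyOffset c e t * (e (t + 1) - e t)).re +
        ‖e (t + 1) - e t‖ ^ 2) := by
  induction T with
  | zero => simp [greedyAnchor, greedyCount]
  | succ T ih =>
    have expand : ‖e (T + 1) - greedyAnchor c e T‖ ^ 2 = ‖e T - greedyAnchor c e T‖ ^ 2 +
        (2 * (greedyOffset c e T * (e (T + 1) - e T)).re + ‖e (T + 1) - e T‖ ^ 2) := by
      rw [← sub_add_sub_cancel' (e T), ← add_assoc, greedyOffset, mul_comm (starRingEnd ℂ _)]
      exact norm_add_sq (𝕜 := ℂ) _ _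
    have drop : c ^ 2 * greedyCount c e (T + 1) + ‖e (T + 1) - greedyAnchor c e (T + 1)‖ ^ 2 ≤
        c ^ 2 * greedyCount c e T + ‖e (T + 1) - greedyAnchor c e T‖ ^ 2 := by
      rw [greedyCount_succ, greedyAnchor]
      split_ifs with h
      · have : c ^ 2 ≤ ‖e (T + 1) - greedyAnchor c e T‖ ^ 2 := pow_le_pow_left₀ hc h 2
        simp only [sub_self, norm_zero, Nat.cast_add, Nat.cast_one]
        linarith
      · simp
    rw [Finset.sum_range_succ]
    linarith

lemma measurable_greedyAnchor {α : Type*} [MeasurableSpace α] {e : α → ℕ → ℂ}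
    (he : ∀ t, Measurable (e · t)) (t : ℕ) : Measurable fun x => greedyAnchor c (e x) t := by
  induction t with
  | zero => exact he 0
  | succ t ih =>
    exact .ite (measurableSet_le measurable_const ((he _).sub ih).norm) (he _) ih

lemma measurable_greedyOffset {α : Type*} [MeasurableSpace α] {e : α → ℕ → ℂ}
    (he : ∀ t, Measurable (e · t)) (t : ℕ) : Measurable fun x => greedyOffset c (e x) t :=
  Complex.continuous_conj.measurable.comp ((he t).sub (measurable_greedyAnchor he t))

end Greedy

/-- The dyadic martingale of `F` started at generation `s`, with time as last argument. -/
def dyadicMartingale (s : ℤ) (F : ℝ → ℂ) (x : ℝ) (t : ℕ) : ℂ :=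
  kernelOp (dyadicKernel (s + t)) F x

section DyadicMartingale

variable {F : ℝ → ℂ} {c : ℝ}

lemma measurable_dyadicMartingale (s : ℤ) (hm : Measurable F) (t : ℕ) :
    Measurable (dyadicMartingale s F · t) :=
  (isSymmSubMarkov_dyadicKernel _).measurable_kernelOp hm

lemma integrable_dyadicMartingale (s : ℤ) (hm : Measurable F) (hi : Integrable F) (t : ℕ) :
    Integrable (dyadicMartingale s F · t) :=
  (isSymmSubMarkov_dyadicKernel _).integrable_kernelOp hm hi

lemma dyadicMartingale_factorsThrough (s : ℤ) (F : ℝ → ℂ) (t : ℕ) :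
    (dyadicMartingale s F · t).FactorsThrough (dyadicIndex (s + t)) :=
  kernelOp_dyadicKernel_factorsThrough _ F

lemma greedyAnchor_dyadicMartingale_factorsThrough (c : ℝ) (s : ℤ) (F : ℝ → ℂ) (t : ℕ) :
    (fun x => greedyAnchor c (dyadicMartingale s F x) t).FactorsThrough
      (dyadicIndex (s + t)) := by
  induction t with
  | zero => exact dyadicMartingale_factorsThrough s F 0
  | succ t ih =>
    intro x z hxz
    have hanchor := ih (dyadicIndex_eq_of_le (by push_cast; omega) hxz)
    have hvalue := dyadicMartingale_factorsThrough s F (t + 1) hxz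
    simp only [greedyAnchor] at hanchor hvalue ⊢
    rw [hanchor, hvalue]

lemma greedyOffset_dyadicMartingale_factorsThrough (c : ℝ) (s : ℤ) (F : ℝ → ℂ) (t : ℕ) :
    (fun x => greedyOffset c (dyadicMartingale s F x) t).FactorsThrough
      (dyadicIndex (s + t)) := by
  intro x z hxz
  have hanchor := greedyAnchor_dyadicMartingale_factorsThrough c s F t hxz
  have hvalue := dyadicMartingale_factorsThrough s F t hxz
  simp only [greedyOffset] at hanchor hvalue ⊢
  rw [hanchor, hvalue]

variable (hc : 0 < c) (s : ℤ) (hm : Measurable F) (hi : Integrable F)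
include hc hm hi

lemma integrable_greedyOffset_mul (t : ℕ) :
    Integrable fun x => greedyOffset c (dyadicMartingale s F x) t *
      (dyadicMartingale s F x (t + 1) - dyadicMartingale s F x t) :=
  ((integrable_dyadicMartingale s hm hi (t + 1)).sub
    (integrable_dyadicMartingale s hm hi t)).bdd_mul
      (measurable_greedyOffset (measurable_dyadicMartingale s hm) t).aestronglyMeasurable
      (.of_forall fun x => norm_greedyOffset_le hc (dyadicMartingale s F x) t)

lemma integral_re_greedyOffset_mul_eq_zero (t : ℕ) :
    ∫ x, (greedyOffset c (dyadicMartingale s F x) t *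
      (dyadicMartingale s F x (t + 1) - dyadicMartingale s F x t)).re = 0 := by
  have horth := integral_mul_kernelOp_sub_eq_zero
    (measurable_greedyOffset (measurable_dyadicMartingale s hm) t)
    (greedyOffset_dyadicMartingale_factorsThrough c s F t)
    (fun x => norm_greedyOffset_le hc (dyadicMartingale s F x) t) hm hi
  rw [add_assoc] at horth
  exact (integral_re (integrable_greedyOffset_mul hc s hm hi t)).trans
    (congrArg Complex.re (mod_cast horth))

lemma lintegral_greedyCount_le_of_integrable {T : ℕ}
    (hsq : ∀ t ∈ Finset.range T,
      Integrable fun x => ‖dyadicMartingale s F x (t + 1) - dyadicMartingale s F x t‖ ^ 2) :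
    ∫⁻ x, ENNReal.ofReal (c ^ 2 * greedyCount c (dyadicMartingale s F x) T) ≤
      ENNReal.ofReal (∑ t ∈ Finset.range T,
        ∫ x, ‖dyadicMartingale s F x (t + 1) - dyadicMartingale s F x t‖ ^ 2) := by
  set M := dyadicMartingale s F
  have hcross (t : ℕ) : Integrable fun x =>
      (2 * (greedyOffset c (M x) t * (M x (t + 1) - M x t)).re : ℝ) :=
    (integrable_greedyOffset_mul hc s hm hi t).re.const_mul 2
  have hterm (t) (ht : t ∈ Finset.range T) : Integrable fun x =>
      2 * (greedyOffset c (M x) t * (M x (t + 1) - M x t)).re + ‖M x (t + 1) - M x t‖ ^ 2 :=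
    (hcross t).add (hsq t ht)
  have hpotential (x : ℝ) : c ^ 2 * greedyCount c (M x) T ≤ ∑ t ∈ Finset.range T,
      (2 * (greedyOffset c (M x) t * (M x (t + 1) - M x t)).re + ‖M x (t + 1) - M x t‖ ^ 2) :=
    (le_add_of_nonneg_right (by positivity)).trans (sq_mul_greedyCount_add_le hc.le (M x) T)
  calc ∫⁻ x, ENNReal.ofReal (c ^ 2 * greedyCount c (M x) T)
      ≤ ∫⁻ x, ENNReal.ofReal (∑ t ∈ Finset.range T,
          (2 * (greedyOffset c (M x) t * (M x (t + 1) - M x t)).re +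
            ‖M x (t + 1) - M x t‖ ^ 2)) := by
        gcongr with x
        exact hpotential x
    _ = ENNReal.ofReal (∑ t ∈ Finset.range T, ∫ x,
          (2 * (greedyOffset c (M x) t * (M x (t + 1) - M x t)).re +
            ‖M x (t + 1) - M x t‖ ^ 2)) := by
        rw [← integral_finsetSum _ hterm]
        exact (ofReal_integral_eq_lintegral_ofReal (integrable_finsetSum _ hterm)
          (.of_forall fun x => le_trans (by positivity) (hpotential x))).symm
    _ = ENNReal.ofReal (∑ t ∈ Finset.range T, ∫ x, ‖M x (t + 1) - M x t‖ ^ 2) := by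
        congr 1
        refine Finset.sum_congr rfl fun t ht => ?_
        rw [integral_add (hcross t) (hsq t ht), integral_const_mul,
          integral_re_greedyOffset_mul_eq_zero hc s hm hi t, mul_zero, zero_add]

lemma lintegral_greedyCount_le (T : ℕ) :
    ENNReal.ofReal (c ^ 2) * ∫⁻ x, greedyCount c (dyadicMartingale s F x) T ≤
      ∑ t ∈ Finset.range T,
        ∫⁻ x, ‖dyadicMartingale s F x (t + 1) - dyadicMartingale s F x t‖ₑ ^ 2 := by
  set D : ℕ → ℝ → ℂ := fun t x => dyadicMartingale s F x (t + 1) - dyadicMartingale s F x t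
  by_cases htop : ∃ t ∈ Finset.range T, ∫⁻ x, ‖D t x‖ₑ ^ 2 = ⊤
  · obtain ⟨t, ht, h⟩ := htop
    exact le_top.trans_eq (ENNReal.sum_eq_top.2 ⟨t, ht, h⟩).symm
  push Not at htop
  have enorm_sq (z : ℂ) : ‖z‖ₑ ^ 2 = ENNReal.ofReal (‖z‖ ^ 2) := by
    rw [← ofReal_norm, ENNReal.ofReal_pow (norm_nonneg z)]
  have hsq (t) (ht : t ∈ Finset.range T) : Integrable fun x => ‖D t x‖ ^ 2 := by
    refine ⟨(((measurable_dyadicMartingale s hm _).sub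
      (measurable_dyadicMartingale s hm _)).norm.pow_const 2).aestronglyMeasurable, ?_⟩
    rw [hasFiniteIntegral_iff_ofReal (.of_forall fun x => sq_nonneg _)]
    simpa only [enorm_sq] using (htop t ht).lt_top
  calc ENNReal.ofReal (c ^ 2) * ∫⁻ x, greedyCount c (dyadicMartingale s F x) T
      = ∫⁻ x, ENNReal.ofReal (c ^ 2 * greedyCount c (dyadicMartingale s F x) T) := by
        rw [← lintegral_const_mul' _ _ ofReal_ne_top]
        simp only [ENNReal.ofReal_mul (sq_nonneg c), ENNReal.ofReal_natCast]
    _ ≤ ENNReal.ofReal (∑ t ∈ Finset.range T, ∫ x, ‖D t x‖ ^ 2) :=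
        lintegral_greedyCount_le_of_integrable hc s hm hi hsq
    _ = ∑ t ∈ Finset.range T, ∫⁻ x, ‖D t x‖ₑ ^ 2 := by
        rw [ENNReal.ofReal_sum_of_nonneg fun t _ => integral_nonneg fun x => sq_nonneg _]
        refine Finset.sum_congr rfl fun t ht => ?_
        rw [ofReal_integral_eq_lintegral_ofReal (hsq t ht) (.of_forall fun x => sq_nonneg _)]
        simp only [enorm_sq]

end DyadicMartingale

/-! ### The jump inequality in `L²` -/

lemma sum_Ioc_add_sum_Ioc {ι M : Type*} [LinearOrder ι] [LocallyFiniteOrder ι] [AddCommMonoid M]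
    (a : ι → M) {p q r : ι} (hpq : p ≤ q) (hqr : q ≤ r) :
    ∑ i ∈ Finset.Ioc p q, a i + ∑ i ∈ Finset.Ioc q r, a i = ∑ i ∈ Finset.Ioc p r, a i := by
  rw [← Finset.sum_union (Finset.Ioc_disjoint_Ioc_of_le le_rfl),
    Finset.Ioc_union_Ioc_eq_Ioc hpq hqr]

lemma one_le_mul_enorm_sq {μ : ℝ} (hμ : 0 < μ) {z : ℂ} (hz : μ / 4 ≤ ‖z‖) :
    1 ≤ ENNReal.ofReal (16 / μ ^ 2) * ‖z‖ₑ ^ 2 := by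
  rw [← ofReal_norm, ← ENNReal.ofReal_pow (norm_nonneg z), ← ENNReal.ofReal_mul (by positivity),
    ENNReal.one_le_ofReal, div_mul_eq_mul_div, le_div_iff₀ (by positivity)]
  nlinarith

-- A block of size `μ` forces a large error at one of its ends, or a jump of `m` inside it.
lemma indicator_lt_norm_add_greedyCount_le {z : ℂ} {R : ℤ → ℂ} {m : ℕ → ℂ} {p q : ℤ} {p' q' : ℕ}
    {μ : ℝ} (hμ : 0 < μ) (hpq : p ≤ q) (hpq' : p' ≤ q') (hz : z = R q - R p + (m q' - m p')) :
    {z : ℂ | μ < ‖z‖}.indicator 1 z + (greedyCount (μ / 4) m p' : ℝ≥0∞) ≤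
      ENNReal.ofReal (16 / μ ^ 2) * ∑ n ∈ Finset.Ioc p q, (‖R (n - 1)‖ₑ ^ 2 + ‖R n‖ₑ ^ 2) +
        greedyCount (μ / 4) m q' := by
  set C := ENNReal.ofReal (16 / μ ^ 2)
  set w : ℤ → ℝ≥0∞ := fun n => ‖R (n - 1)‖ₑ ^ 2 + ‖R n‖ₑ ^ 2
  have hcount : (greedyCount (μ / 4) m p' : ℝ≥0∞) ≤ greedyCount (μ / 4) m q' :=
    Nat.cast_le.2 (monotone_greedyCount _ _ hpq')
  by_cases hjump : z ∈ {z : ℂ | μ < ‖z‖}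
  swap
  · rw [Set.indicator_of_notMem hjump, zero_add]
    exact hcount.trans le_add_self
  rw [Set.indicator_of_mem hjump, Pi.one_apply]
  rw [Set.mem_ofPred_eq] at hjump
  have herror (n) (hn : n ∈ Finset.Ioc p q) (hw : 1 ≤ C * w n) :
      1 + (greedyCount (μ / 4) m p' : ℝ≥0∞) ≤
        C * ∑ n ∈ Finset.Ioc p q, w n + greedyCount (μ / 4) m q' :=
    add_le_add (hw.trans (mul_le_mul_right
      (Finset.single_le_sum (f := w) (fun _ _ => zero_le) hn) C)) hcount
  have hends := norm_sub_le (R q) (R p)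
  have hnorm := norm_add_le (R q - R p) (m q' - m p')
  rw [← hz] at hnorm
  by_cases! hm : 2 * (μ / 4) ≤ ‖m q' - m p'‖
  · have := greedyCount_lt_of_le_norm_sub (by positivity) hpq' hm
    rw [add_comm]
    exact (by exact_mod_cast this : (_ : ℝ≥0∞) + 1 ≤ _).trans le_add_self
  have hlt : p < q := hpq.lt_of_ne fun heq => by
    rw [heq, sub_self, norm_zero] at hnorm
    linarith
  rcases le_or_gt (μ / 4) ‖R q‖ with hRq | hRq
  · refine herror q (by simp [hlt]) ((one_le_mul_enorm_sq hμ hRq).trans ?_)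
    gcongr
    exact le_add_self
  · refine herror (p + 1) (by simp; omega)
      ((one_le_mul_enorm_sq hμ (by linarith : μ / 4 ≤ ‖R p‖)).trans ?_)
    simp only [w, add_sub_cancel_right]
    gcongr
    exact le_self_add

lemma blockVariation_jump_le {a R : ℤ → ℂ} {m : ℕ → ℂ} {s e : ℤ} {μ : ℝ} (hμ : 0 < μ)
    (h : ∀ n, s ≤ n → n ≤ e → ∑ i ∈ Finset.Ioc s n, a i = R n + m (n - s).toNat) :
    blockVariation ({z | μ < ‖z‖}.indicator 1) a s e ≤
      ENNReal.ofReal (16 / μ ^ 2) * ∑ n ∈ Finset.Ioc s e, (‖R (n - 1)‖ₑ ^ 2 + ‖R n‖ₑ ^ 2) +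
        greedyCount (μ / 4) m (e - s).toNat := by
  refine blockVariation_le_of_superadditive
    (b := fun p => ENNReal.ofReal (16 / μ ^ 2) *
      ∑ n ∈ Finset.Ioc s p, (‖R (n - 1)‖ₑ ^ 2 + ‖R n‖ₑ ^ 2) +
        greedyCount (μ / 4) m (p - s).toNat) fun p q hp hpq hq => ?_
  have hblock : ∑ i ∈ Finset.Ioc p q, a i =
      R q - R p + (m (q - s).toNat - m (p - s).toNat) := by
    have := sum_Ioc_add_sum_Ioc a hp hpq
    rw [h p hp (by omega), h q (by omega) hq] at this
    linear_combination this
  rw [add_left_comm, ← sum_Ioc_add_sum_Ioc (fun n => ‖R (n - 1)‖ₑ ^ 2 + ‖R n‖ₑ ^ 2) hp hpq, mul_add,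
    add_assoc]
  exact add_le_add_right (indicator_lt_norm_add_greedyCount_le hμ hpq (by omega) hblock) _

/-- The sum of the convolutions of scales in `I`. -/
def convSum (K u : ℤ → ℝ → ℂ) (I : Finset ℤ) (x : ℝ) : ℂ := ∑ i ∈ I, conv (K i) (u i) x

namespace IsLittlewoodPaleyFamily

variable {A : ℝ} {K : ℤ → ℝ → ℂ} (hK : IsLittlewoodPaleyFamily A K) {u : ℤ → ℝ → ℂ}
  (hm : ∀ i, Measurable (u i)) (hi : ∀ i, Integrable (u i))
include hK hm

lemma measurable_convSum (I : Finset ℤ) : Measurable (convSum K u I) :=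
  Finset.measurable_fun_sum _ fun i _ => hK.measurable_conv i (hm i)

lemma measurable_enorm_sum_truncationError_sq (I : Finset ℤ) (n : ℤ) :
    Measurable fun x => ‖∑ i ∈ I, truncationError K n i (u i) x‖ₑ ^ 2 :=
  (Finset.measurable_fun_sum _ fun i _ =>
    hK.measurable_truncationError n i (hm i)).enorm.pow_const 2

include hi

lemma integrable_convSum (I : Finset ℤ) : Integrable (convSum K u I) :=
  integrable_finsetSum _ fun i _ => hK.integrable_conv i (hm i) (hi i)

lemma sum_truncationError_add {s e n : ℤ} (hn : n ≤ e) (x : ℝ) :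
    ∑ i ∈ Finset.Ioc s n, conv (K i) (u i) x =
      ∑ i ∈ Finset.Ioc s e, truncationError K n i (u i) x +
        kernelOp (dyadicKernel n) (convSum K u (Finset.Ioc s e)) x := by
  have hcut : (Finset.Ioc s e).filter (· ≤ n) = Finset.Ioc s n := by
    ext i
    simp only [Finset.mem_filter, Finset.mem_Ioc]
    omega
  have hlinear : kernelOp (dyadicKernel n) (convSum K u (Finset.Ioc s e)) x =
      ∑ i ∈ Finset.Ioc s e, kernelOp (dyadicKernel n) (conv (K i) (u i)) x := by
    simp only [kernelOp, convSum, Finset.mul_sum]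
    exact integral_finsetSum _ fun i _ => (isSymmSubMarkov_dyadicKernel n).integrable_mul
      (dyadicKernel_le n x) (hK.integrable_conv i (hm i) (hi i))
  simp only [truncationError, Finset.sum_sub_distrib, ← Finset.sum_filter, hcut, hlinear,
    sub_add_cancel]

lemma sum_lintegral_truncationError_pair_le (s e : ℤ) :
    ∑ n ∈ Finset.Ioc s e,
        ((∫⁻ x, ‖∑ i ∈ Finset.Ioc s e, truncationError K (n - 1) i (u i) x‖ₑ ^ 2) +
          ∫⁻ x, ‖∑ i ∈ Finset.Ioc s e, truncationError K n i (u i) x‖ₑ ^ 2) ≤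
      1176 * ENNReal.ofReal (A * Real.pi) ^ 2 * ∑ i ∈ Finset.Ioc s e, ∫⁻ y, ‖u i y‖ₑ ^ 2 := by
  have hbound (J : Finset ℤ) := hK.sum_lintegral_enorm_sum_truncationError_sq_le
    (Finset.Ioc s e) J hm hi
  rw [ENNReal.ofReal_mul (by norm_num), ENNReal.ofReal_ofNat,
    ENNReal.ofReal_pow (mul_nonneg hK.nonneg Real.pi_pos.le)] at hbound
  have hshift := hbound ((Finset.Ioc s e).map (Equiv.subRight 1).toEmbedding)
  rw [Finset.sum_map] at hshift
  rw [Finset.sum_add_distrib]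
  refine (add_le_add hshift (hbound (Finset.Ioc s e))).trans_eq ?_
  ring

lemma kernelOp_convSum_sub_eq {s e n : ℤ} (hn : n ∈ Finset.Ioc s e) (x : ℝ) :
    kernelOp (dyadicKernel n) (convSum K u (Finset.Ioc s e)) x -
        kernelOp (dyadicKernel (n - 1)) (convSum K u (Finset.Ioc s e)) x =
      ∑ i ∈ Finset.Ioc s e, truncationError K (n - 1) i (u i) x -
        ∑ i ∈ Finset.Ioc s e, truncationError K n i (u i) x + conv (K n) (u n) x := by
  rw [Finset.mem_Ioc] at hn
  have hsum := sum_Ioc_add_sum_Ioc (fun i => conv (K i) (u i) x)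
    (by omega : s ≤ n - 1) (by omega : n - 1 ≤ n)
  have hlast : Finset.Ioc (n - 1) n = {n} := by
    ext i
    simp only [Finset.mem_Ioc, Finset.mem_singleton]
    omega
  rw [hlast, Finset.sum_singleton, hK.sum_truncationError_add hm hi (by omega : n - 1 ≤ e),
    hK.sum_truncationError_add hm hi hn.2] at hsum
  linear_combination -hsum

lemma lintegral_kernelOp_convSum_sub_sq_le {s e n : ℤ} (hn : n ∈ Finset.Ioc s e) :
    ∫⁻ x, ‖kernelOp (dyadicKernel n) (convSum K u (Finset.Ioc s e)) x -
        kernelOp (dyadicKernel (n - 1)) (convSum K u (Finset.Ioc s e)) x‖ₑ ^ 2 ≤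
      4 * ((∫⁻ x, ‖∑ i ∈ Finset.Ioc s e, truncationError K (n - 1) i (u i) x‖ₑ ^ 2) +
        ∫⁻ x, ‖∑ i ∈ Finset.Ioc s e, truncationError K n i (u i) x‖ₑ ^ 2) +
      2 * (ENNReal.ofReal (A * Real.pi) ^ 2 * ∫⁻ y, ‖u n y‖ₑ ^ 2) := by
  set R : ℤ → ℝ → ℂ := fun n x => ∑ i ∈ Finset.Ioc s e, truncationError K n i (u i) x
  have hRm (n : ℤ) : Measurable fun x => ‖R n x‖ₑ ^ 2 :=
    hK.measurable_enorm_sum_truncationError_sq hm (Finset.Ioc s e) n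
  have hpoint (x : ℝ) : ‖R (n - 1) x - R n x + conv (K n) (u n) x‖ₑ ^ 2 ≤
      4 * (‖R (n - 1) x‖ₑ ^ 2 + ‖R n x‖ₑ ^ 2) + 2 * ‖conv (K n) (u n) x‖ₑ ^ 2 := by
    calc ‖R (n - 1) x - R n x + conv (K n) (u n) x‖ₑ ^ 2
        ≤ (‖R (n - 1) x‖ₑ + ‖R n x‖ₑ + ‖conv (K n) (u n) x‖ₑ) ^ 2 := by
          gcongr
          exact (enorm_add_le _ _).trans (add_le_add_left enorm_sub_le _)
      _ ≤ 2 * (2 * (‖R (n - 1) x‖ₑ ^ 2 + ‖R n x‖ₑ ^ 2) + ‖conv (K n) (u n) x‖ₑ ^ 2) := by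
          refine (add_sq_le_two_mul _ _).trans ?_
          gcongr
          exact add_sq_le_two_mul _ _
      _ = _ := by ring
  simp only [hK.kernelOp_convSum_sub_eq hm hi hn]
  calc _ ≤ ∫⁻ x, (4 * (‖R (n - 1) x‖ₑ ^ 2 + ‖R n x‖ₑ ^ 2) + 2 * ‖conv (K n) (u n) x‖ₑ ^ 2) :=
        lintegral_mono hpoint
    _ = 4 * ((∫⁻ x, ‖R (n - 1) x‖ₑ ^ 2) + ∫⁻ x, ‖R n x‖ₑ ^ 2) +
          2 * ∫⁻ x, ‖conv (K n) (u n) x‖ₑ ^ 2 := by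
        rw [← lintegral_add_left (hRm (n - 1)), ← lintegral_const_mul' _ _ (ofNat_ne_top),
          ← lintegral_const_mul' _ _ (ofNat_ne_top)]
        exact lintegral_add_left (((hRm _).add (hRm _)).const_mul 4) _
    _ ≤ _ := by
        rw [sq (ENNReal.ofReal _)]
        gcongr
        exact hK.lintegral_enorm_conv_sq_le n (hm n)

lemma sum_lintegral_dyadicMartingale_sub_sq_le (s e : ℤ) :
    ∑ t ∈ Finset.range (e - s).toNat,
        ∫⁻ x, ‖dyadicMartingale s (convSum K u (Finset.Ioc s e)) x (t + 1) -
          dyadicMartingale s (convSum K u (Finset.Ioc s e)) x t‖ₑ ^ 2 ≤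
      4706 * ENNReal.ofReal (A * Real.pi) ^ 2 * ∑ i ∈ Finset.Ioc s e, ∫⁻ y, ‖u i y‖ₑ ^ 2 := by
  set d : ℤ → ℝ≥0∞ := fun n =>
    ∫⁻ x, ‖kernelOp (dyadicKernel n) (convSum K u (Finset.Ioc s e)) x -
      kernelOp (dyadicKernel (n - 1)) (convSum K u (Finset.Ioc s e)) x‖ₑ ^ 2 with hd
  have hterm (t : ℕ) : ∫⁻ x, ‖dyadicMartingale s (convSum K u (Finset.Ioc s e)) x (t + 1) -
      dyadicMartingale s (convSum K u (Finset.Ioc s e)) x t‖ₑ ^ 2 = d (s + 1 + t) := by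
    simp only [hd, dyadicMartingale, Nat.cast_add_one, add_right_comm s 1, add_sub_cancel_right,
      ← add_assoc]
  have hreindex : ∑ t ∈ Finset.range (e - s).toNat, d (s + 1 + t) = ∑ n ∈ Finset.Ioc s e, d n := by
    rw [Int.Ioc_eq_finset_map, Finset.sum_map]
    rfl
  simp only [hterm, hreindex]
  refine (Finset.sum_le_sum fun n hn =>
    hK.lintegral_kernelOp_convSum_sub_sq_le hm hi hn).trans ?_
  rw [Finset.sum_add_distrib, ← Finset.mul_sum, ← Finset.mul_sum, ← Finset.mul_sum]
  refine (add_le_add_left (mul_le_mul_right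
    (hK.sum_lintegral_truncationError_pair_le hm hi s e) 4) _).trans_eq ?_
  ring

lemma sq_mul_lintegral_blockVariation_jump_le (s e : ℤ) {μ : ℝ} (hμ : 0 < μ) :
    ENNReal.ofReal (μ ^ 2) * ∫⁻ x, blockVariation ({z | μ < ‖z‖}.indicator 1)
        (fun i => conv (K i) (u i) x) s e ≤
      94112 * ENNReal.ofReal (A * Real.pi) ^ 2 * ∑ i ∈ Finset.Ioc s e, ∫⁻ y, ‖u i y‖ₑ ^ 2 := by
  set R : ℤ → ℝ → ℂ := fun n x => ∑ i ∈ Finset.Ioc s e, truncationError K n i (u i) x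
  set M := dyadicMartingale s (convSum K u (Finset.Ioc s e))
  have hR (n : ℤ) : Measurable fun x => ‖R n x‖ₑ ^ 2 :=
    hK.measurable_enorm_sum_truncationError_sq hm (Finset.Ioc s e) n
  have hpoint (x : ℝ) := blockVariation_jump_le (a := fun i => conv (K i) (u i) x)
    (R := (R · x)) (m := M x) (s := s) (e := e) hμ fun n hs he => by
      rw [hK.sum_truncationError_add hm hi he]
      simp only [M, dyadicMartingale, Int.toNat_sub_of_le hs, add_sub_cancel, R]
  have hsplit : ∫⁻ x, (ENNReal.ofReal (16 / μ ^ 2) *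
      ∑ n ∈ Finset.Ioc s e, (‖R (n - 1) x‖ₑ ^ 2 + ‖R n x‖ₑ ^ 2) +
        greedyCount (μ / 4) (M x) (e - s).toNat) =
      ENNReal.ofReal (16 / μ ^ 2) * ∑ n ∈ Finset.Ioc s e,
        ((∫⁻ x, ‖R (n - 1) x‖ₑ ^ 2) + ∫⁻ x, ‖R n x‖ₑ ^ 2) +
          ∫⁻ x, greedyCount (μ / 4) (M x) (e - s).toNat := by
    have hpair (n : ℤ) : Measurable fun x => ‖R (n - 1) x‖ₑ ^ 2 + ‖R n x‖ₑ ^ 2 :=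
      (hR _).add (hR _)
    rw [lintegral_add_left ((Finset.measurable_fun_sum _ fun n _ => hpair n).const_mul _),
      lintegral_const_mul' _ _ ofReal_ne_top, lintegral_finsetSum _ fun n _ => hpair n]
    simp only [lintegral_add_left (hR _)]
  have hscale : ENNReal.ofReal (μ ^ 2) * ENNReal.ofReal (16 / μ ^ 2) = 16 := by
    rw [← ENNReal.ofReal_mul (by positivity), mul_div_cancel₀ _ (by positivity),
      ENNReal.ofReal_ofNat]
  have hquarter : ENNReal.ofReal (μ ^ 2) = 16 * ENNReal.ofReal ((μ / 4) ^ 2) := by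
    rw [← ENNReal.ofReal_ofNat 16, ← ENNReal.ofReal_mul (by norm_num)]
    congr 1
    ring
  have hcount := (lintegral_greedyCount_le (c := μ / 4) (by positivity) s
    (hK.measurable_convSum hm _) (hK.integrable_convSum hm hi _) _).trans
      (hK.sum_lintegral_dyadicMartingale_sub_sq_le hm hi s e)
  have hpair := hK.sum_lintegral_truncationError_pair_le hm hi s e
  refine (mul_le_mul_right ((lintegral_mono hpoint).trans_eq hsplit) _).trans ?_
  rw [mul_add, ← mul_assoc, hscale, hquarter, mul_assoc]
  refine (add_le_add (mul_le_mul_right hpair 16) (mul_le_mul_right hcount 16)).trans_eq ?_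
  ring

end IsLittlewoodPaleyFamily

/-! ### Strong type `(r, r)` by interpolation -/

lemma blockVariation_enorm_rpow_le {r : ℝ} (hr : 1 ≤ r) (a : ℤ → ℂ) (s e : ℤ) :
    blockVariation (‖·‖ₑ ^ r) a s e ≤ (∑ i ∈ Finset.Ioc s e, ‖a i‖ₑ) ^ r := by
  refine blockVariation_le_of_superadditive (b := fun p => (∑ i ∈ Finset.Ioc s p, ‖a i‖ₑ) ^ r)
    fun p q hp hpq _ => ?_
  rw [add_comm, ← sum_Ioc_add_sum_Ioc _ hp hpq]
  refine le_trans ?_ (ENNReal.add_rpow_le_rpow_add _ _ hr)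
  gcongr
  exact enorm_sum_le _ _

lemma blockVariation_enorm_rpow_add_le {r : ℝ} (hr : 1 ≤ r) (a b : ℤ → ℂ) (s e : ℤ) :
    blockVariation (‖·‖ₑ ^ r) (fun i => a i + b i) s e ≤
      2 ^ (r - 1) * (blockVariation (‖·‖ₑ ^ r) a s e + blockVariation (‖·‖ₑ ^ r) b s e) := by
  refine blockVariation_le fun k n hn hs he => ?_
  calc ∑ l ∈ Finset.range k, ‖∑ i ∈ Finset.Ioc (n l) (n (l + 1)), (a i + b i)‖ₑ ^ r
      ≤ ∑ l ∈ Finset.range k, 2 ^ (r - 1) * (‖∑ i ∈ Finset.Ioc (n l) (n (l + 1)), a i‖ₑ ^ r +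
          ‖∑ i ∈ Finset.Ioc (n l) (n (l + 1)), b i‖ₑ ^ r) := by
        gcongr with l
        rw [Finset.sum_add_distrib]
        exact (ENNReal.rpow_le_rpow (enorm_add_le _ _) (by linarith)).trans
          (ENNReal.rpow_add_le_mul_rpow_add_rpow _ _ hr)
    _ ≤ _ := by
        rw [← Finset.mul_sum, Finset.sum_add_distrib]
        gcongr
        · exact le_blockVariation hn hs he
        · exact le_blockVariation hn hs he

lemma blockVariation_jump_add_le (a b : ℤ → ℂ) (s e : ℤ) {μ : ℝ} (hμ : 0 < μ) :
    blockVariation ({z | μ < ‖z‖}.indicator 1) (fun i => a i + b i) s e ≤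
      blockVariation ({z | μ / 2 < ‖z‖}.indicator 1) a s e +
        ENNReal.ofReal (2 / μ) * blockVariation (‖·‖ₑ) b s e := by
  have hpoint (z w : ℂ) : {z | μ < ‖z‖}.indicator (1 : ℂ → ℝ≥0∞) (z + w) ≤
      {z | μ / 2 < ‖z‖}.indicator 1 z + ENNReal.ofReal (2 / μ) * ‖w‖ₑ := by
    refine Set.indicator_apply_le' (fun hzw => ?_) fun _ => zero_le
    by_cases hz : z ∈ {z : ℂ | μ / 2 < ‖z‖}
    · rw [Set.indicator_of_mem hz]
      exact le_self_add
    refine le_add_of_nonneg_of_le zero_le ?_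
    rw [Set.mem_ofPred_eq] at hz hzw
    rw [Pi.one_apply, ← ofReal_norm, ← ENNReal.ofReal_mul (by positivity), ENNReal.one_le_ofReal,
      div_mul_eq_mul_div, one_le_div hμ]
    linarith [norm_add_le z w]
  refine blockVariation_le fun k n hn hs he => ?_
  simp only [Finset.sum_add_distrib]
  refine (Finset.sum_le_sum fun l _ => hpoint _ _).trans ?_
  rw [Finset.sum_add_distrib, ← Finset.mul_sum]
  gcongr
  exacts [le_blockVariation hn hs he, le_blockVariation (Φ := (‖·‖ₑ)) hn hs he]

lemma blockVariation_rpow_le (a : ℤ → ℂ) (s e : ℤ) {r : ℝ} (hr : 0 < r) :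
    blockVariation (‖·‖ₑ ^ r) a s e ≤
      ENNReal.ofReal r * ∫⁻ t in Set.Ioi 0,
        blockVariation ({z | t < ‖z‖}.indicator 1) a s e * ENNReal.ofReal (t ^ (r - 1)) := by
  have hlayer (z : ℂ) : ‖z‖ₑ ^ r = ENNReal.ofReal r *
      ∫⁻ t in Set.Ioi 0, {z | t < ‖z‖}.indicator 1 z * ENNReal.ofReal (t ^ (r - 1)) := by
    have := lintegral_rpow_eq_lintegral_meas_lt_mul (Measure.dirac z)
      (.of_forall fun z => norm_nonneg z) measurable_norm.aemeasurable hr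
    simpa only [lintegral_dirac, Measure.dirac_apply, ofReal_norm,
      ← ENNReal.ofReal_rpow_of_nonneg (norm_nonneg _) hr.le] using this
  have hmeas (z : ℂ) : Measurable fun t : ℝ =>
      {z : ℂ | t < ‖z‖}.indicator (1 : ℂ → ℝ≥0∞) z * ENNReal.ofReal (t ^ (r - 1)) := by
    refine Measurable.mul ?_ (by fun_prop)
    exact measurable_const.indicator measurableSet_Iio
  refine blockVariation_le fun k n hn hs he => ?_
  simp only [hlayer]
  rw [← Finset.mul_sum, ← lintegral_finsetSum _ fun l _ => hmeas _]
  gcongr with t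
  rw [← Finset.sum_mul]
  gcongr
  exact le_blockVariation hn hs he

lemma lintegral_blockVariation_rpow_le_lintegral_jump {α : Type*} [MeasurableSpace α]
    {ν : Measure α} [SFinite ν] {a : ℤ → α → ℂ} (ha : ∀ i, Measurable (a i)) (s e : ℤ) {r : ℝ}
    (hr : 0 < r) :
    ∫⁻ x, blockVariation (‖·‖ₑ ^ r) (fun i => a i x) s e ∂ν ≤
      ENNReal.ofReal r * ∫⁻ t in Set.Ioi 0,
        (∫⁻ x, blockVariation ({z | t < ‖z‖}.indicator 1) (fun i => a i x) s e ∂ν) *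
          ENNReal.ofReal (t ^ (r - 1)) := by
  have hmeas : Measurable fun p : α × ℝ => blockVariation ({z | p.2 < ‖z‖}.indicator 1)
      (fun i => a i p.1) s e * ENNReal.ofReal (p.2 ^ (r - 1)) := by
    refine Measurable.mul ?_ (by fun_prop)
    refine measurable_blockVariation ?_ fun i => (ha i).comp measurable_fst
    exact measurable_const.indicator (measurableSet_lt (by fun_prop) (by fun_prop))
  simp only [← lintegral_mul_const' _ _ ofReal_ne_top]
  rw [← lintegral_lintegral_swap hmeas.aemeasurable, ← lintegral_const_mul' _ _ ofReal_ne_top]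
  exact lintegral_mono fun x => blockVariation_rpow_le _ s e hr

/-- The size of `z` relative to the level `μ`, quadratic below the level and linear above it: what
`z` contributes to the jumps of height `μ`. -/
def levelCost (μ : ℝ) (z : ℂ) : ℝ≥0∞ := ENNReal.ofReal (min (‖z‖ / μ) ((‖z‖ / μ) ^ 2))

lemma measurable_levelCost : Measurable fun p : ℝ × ℂ => levelCost p.1 p.2 :=
  ENNReal.measurable_ofReal.comp (by fun_prop)

lemma enorm_sq_le_levelCost {μ : ℝ} (hμ : 0 < μ) {z : ℂ} (hz : ‖z‖ ≤ μ) :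
    ‖z‖ₑ ^ 2 ≤ ENNReal.ofReal (μ ^ 2) * levelCost μ z := by
  have hle : ‖z‖ / μ ≤ 1 := (div_le_one hμ).2 hz
  rw [levelCost, min_eq_right (by rw [sq]; exact mul_le_of_le_one_left (by positivity) hle),
    ← ENNReal.ofReal_mul (by positivity), ← mul_pow, mul_div_cancel₀ _ hμ.ne',
    ENNReal.ofReal_pow (norm_nonneg z), ofReal_norm]

lemma enorm_le_levelCost {μ : ℝ} (hμ : 0 < μ) {z : ℂ} (hz : μ < ‖z‖) :
    ‖z‖ₑ ≤ ENNReal.ofReal μ * levelCost μ z := by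
  have hle : 1 ≤ ‖z‖ / μ := (one_le_div hμ).2 hz.le
  rw [levelCost, min_eq_left (by rw [sq]; exact le_mul_of_one_le_left (by positivity) hle),
    ← ENNReal.ofReal_mul hμ.le, mul_div_cancel₀ _ hμ.ne', ofReal_norm]

section LevelSplitting

variable {α : Type*} [MeasurableSpace α] {ν : Measure α} (h : α → ℂ) {μ : ℝ} (hμ : 0 < μ)
include hμ

lemma lintegral_enorm_indicator_sq_le :
    ∫⁻ y, ‖{y | ‖h y‖ ≤ μ}.indicator h y‖ₑ ^ 2 ∂ν ≤
      ENNReal.ofReal (μ ^ 2) * ∫⁻ y, levelCost μ (h y) ∂ν := by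
  rw [← lintegral_const_mul' _ _ ofReal_ne_top]
  refine lintegral_mono fun y => ?_
  by_cases hy : y ∈ {y | ‖h y‖ ≤ μ}
  · simpa only [Set.indicator_of_mem hy] using enorm_sq_le_levelCost hμ hy
  · simp [Set.indicator_of_notMem hy]

lemma lintegral_enorm_indicator_compl_le :
    ∫⁻ y, ‖{y | ‖h y‖ ≤ μ}ᶜ.indicator h y‖ₑ ∂ν ≤
      ENNReal.ofReal μ * ∫⁻ y, levelCost μ (h y) ∂ν := by
  rw [← lintegral_const_mul' _ _ ofReal_ne_top]
  refine lintegral_mono fun y => ?_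
  by_cases hy : y ∈ {y | ‖h y‖ ≤ μ}ᶜ
  · simpa only [Set.indicator_of_mem hy] using enorm_le_levelCost hμ (not_le.1 hy)
  · simp [Set.indicator_of_notMem hy]

end LevelSplitting

lemma lintegral_Ioc_rpow_mul_levelCost_le {r : ℝ} (hr : 1 < r) {z : ℂ} (hz : 0 < ‖z‖) :
    ∫⁻ μ in Set.Ioc 0 ‖z‖, levelCost μ z * ENNReal.ofReal (μ ^ (r - 1)) ≤
      ENNReal.ofReal (1 / (r - 1)) * ‖z‖ₑ ^ r := by
  have hInt : IntegrableOn (fun μ : ℝ => ‖z‖ * μ ^ (r - 2)) (Set.Ioc 0 ‖z‖) :=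
    ((intervalIntegral.intervalIntegrable_rpow' (by linarith)).1).const_mul _
  calc _ ≤ ∫⁻ μ in Set.Ioc 0 ‖z‖, ENNReal.ofReal (‖z‖ * μ ^ (r - 2)) := by
        refine setLIntegral_mono' measurableSet_Ioc fun μ hμ => ?_
        have hμ0 : 0 < μ := hμ.1
        rw [levelCost, ← ENNReal.ofReal_mul (by positivity)]
        refine ENNReal.ofReal_le_ofReal ?_
        calc _ ≤ ‖z‖ / μ * μ ^ (r - 1) := by gcongr; exact min_le_left _ _
          _ = _ := by
            rw [show r - 1 = r - 2 + 1 by ring, Real.rpow_add_one hμ0.ne']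
            field_simp
    _ = ENNReal.ofReal (‖z‖ ^ r / (r - 1)) := by
        rw [← ofReal_integral_eq_lintegral_ofReal hInt
          ((ae_restrict_mem measurableSet_Ioc).mono fun μ hμ =>
            mul_nonneg hz.le (Real.rpow_nonneg hμ.1.le _)),
          integral_const_mul, ← intervalIntegral.integral_of_le hz.le,
          integral_rpow (.inl (by linarith)), Real.zero_rpow (by linarith), sub_zero,
          show r = r - 2 + 1 + 1 by ring, Real.rpow_add_one hz.ne' (r - 2 + 1)]
        ring_nf
    _ = _ := by
        rw [div_eq_mul_one_div, mul_comm, ENNReal.ofReal_mul (by simp; linarith),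
          ← ENNReal.ofReal_rpow_of_nonneg hz.le (by linarith), ofReal_norm]

lemma lintegral_Ioi_rpow_mul_levelCost_le {r : ℝ} (hr0 : 0 ≤ r) (hr : r < 2) {z : ℂ}
    (hz : 0 < ‖z‖) :
    ∫⁻ μ in Set.Ioi ‖z‖, levelCost μ z * ENNReal.ofReal (μ ^ (r - 1)) ≤
      ENNReal.ofReal (1 / (2 - r)) * ‖z‖ₑ ^ r := by
  calc _ ≤ ∫⁻ μ in Set.Ioi ‖z‖, ENNReal.ofReal (‖z‖ ^ 2 * μ ^ (r - 3)) := by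
        refine setLIntegral_mono' measurableSet_Ioi fun μ hμ => ?_
        have hμ0 : 0 < μ := hz.trans hμ
        rw [levelCost, ← ENNReal.ofReal_mul (by positivity)]
        refine ENNReal.ofReal_le_ofReal ?_
        calc _ ≤ (‖z‖ / μ) ^ 2 * μ ^ (r - 1) := by gcongr; exact min_le_right _ _
          _ = _ := by
            rw [show r - 1 = r - 3 + 1 + 1 by ring, Real.rpow_add_one hμ0.ne',
              Real.rpow_add_one hμ0.ne']
            field_simp
    _ = ENNReal.ofReal (‖z‖ ^ r / (2 - r)) := by
        rw [← ofReal_integral_eq_lintegral_ofReal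
          ((integrableOn_Ioi_rpow_of_lt (by linarith) hz).const_mul _)
          ((ae_restrict_mem measurableSet_Ioi).mono fun μ hμ =>
            mul_nonneg (sq_nonneg _) (Real.rpow_nonneg (hz.trans hμ).le _)),
          integral_const_mul, integral_Ioi_rpow_of_lt (by linarith) hz]
        congr 1
        rw [neg_div, ← div_neg, mul_div_assoc', ← Real.rpow_two, ← Real.rpow_add hz]
        ring_nf
    _ = _ := by
        rw [div_eq_mul_one_div, mul_comm, ENNReal.ofReal_mul (by simp; linarith),
          ← ENNReal.ofReal_rpow_of_nonneg hz.le hr0, ofReal_norm]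

lemma lintegral_rpow_mul_levelCost_le {r : ℝ} (hr1 : 1 < r) (hr2 : r < 2) (z : ℂ) :
    ∫⁻ μ in Set.Ioi 0, levelCost μ z * ENNReal.ofReal (μ ^ (r - 1)) ≤
      (ENNReal.ofReal (1 / (r - 1)) + ENNReal.ofReal (1 / (2 - r))) * ‖z‖ₑ ^ r := by
  rcases (norm_nonneg z).eq_or_lt with hz | hz
  · simp [levelCost, ← hz]
  rw [← Set.Ioc_union_Ioi_eq_Ioi hz.le, add_mul]
  exact (lintegral_union_le _ _ _).trans (add_le_add
    (lintegral_Ioc_rpow_mul_levelCost_le hr1 hz)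
    (lintegral_Ioi_rpow_mul_levelCost_le (by linarith) hr2 hz))

lemma lintegral_lintegral_levelCost_le {α : Type*} [MeasurableSpace α] {ν : Measure α} [SFinite ν]
    {h : α → ℂ} (hm : Measurable h) {r : ℝ} (hr1 : 1 < r) (hr2 : r < 2) :
    ∫⁻ μ in Set.Ioi 0, (∫⁻ y, levelCost μ (h y) ∂ν) * ENNReal.ofReal (μ ^ (r - 1)) ≤
      (ENNReal.ofReal (1 / (r - 1)) + ENNReal.ofReal (1 / (2 - r))) * ∫⁻ y, ‖h y‖ₑ ^ r ∂ν := by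
  have hmeas : Measurable fun p : ℝ × α =>
      levelCost p.1 (h p.2) * ENNReal.ofReal (p.1 ^ (r - 1)) :=
    (measurable_levelCost.comp (measurable_fst.prodMk (hm.comp measurable_snd))).mul (by fun_prop)
  simp only [← lintegral_mul_const' _ _ ofReal_ne_top]
  rw [lintegral_lintegral_swap hmeas.aemeasurable, ← lintegral_const_mul' _ _ (by finiteness)]
  exact lintegral_mono fun y => lintegral_rpow_mul_levelCost_le hr1 hr2 _

namespace IsLittlewoodPaleyFamily

variable {A : ℝ} {K : ℤ → ℝ → ℂ} (hK : IsLittlewoodPaleyFamily A K) {f : ℤ → ℝ → ℂ}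
  (hm : ∀ i, Measurable (f i)) (hi : ∀ i, Integrable (f i))
include hK hm

lemma lintegral_blockVariation_enorm_le (s e : ℤ) :
    ∫⁻ x, blockVariation (‖·‖ₑ) (fun i => conv (K i) (f i) x) s e ≤
      ENNReal.ofReal (A * Real.pi) * ∑ i ∈ Finset.Ioc s e, ∫⁻ y, ‖f i y‖ₑ := by
  refine (lintegral_mono fun x => by
    simpa only [ENNReal.rpow_one] using blockVariation_enorm_rpow_le le_rfl _ s e).trans ?_
  rw [lintegral_finsetSum _ fun i _ => (hK.measurable_conv i (hm i)).enorm, Finset.mul_sum]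
  exact Finset.sum_le_sum fun i _ => hK.lintegral_enorm_conv_le i (hm i)

include hi

lemma lintegral_blockVariation_jump_le_of_add (s e : ℤ) {g : ℤ → ℝ → ℂ}
    (hgm : ∀ i, Measurable (g i)) (hgi : ∀ i, Integrable (g i)) {μ : ℝ} (hμ : 0 < μ) :
    ∫⁻ x, blockVariation ({z | μ < ‖z‖}.indicator 1) (fun i => conv (K i) (f i + g i) x) s e ≤
      (ENNReal.ofReal ((μ / 2) ^ 2))⁻¹ *
          (94112 * ENNReal.ofReal (A * Real.pi) ^ 2 * ∑ i ∈ Finset.Ioc s e, ∫⁻ y, ‖f i y‖ₑ ^ 2) +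
        ENNReal.ofReal (2 / μ) *
          (ENNReal.ofReal (A * Real.pi) * ∑ i ∈ Finset.Ioc s e, ∫⁻ y, ‖g i y‖ₑ) := by
  have hf := hK.sq_mul_lintegral_blockVariation_jump_le hm hi s e (half_pos hμ)
  rw [ENNReal.mul_le_iff_le_inv (by simpa using hμ.ne') ofReal_ne_top] at hf
  calc _ ≤ ∫⁻ x, (blockVariation ({z | μ / 2 < ‖z‖}.indicator 1)
            (fun i => conv (K i) (f i) x) s e +
          ENNReal.ofReal (2 / μ) * blockVariation (‖·‖ₑ) (fun i => conv (K i) (g i) x) s e) := by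
        simp only [hK.conv_add _ (hi _) (hgi _)]
        exact lintegral_mono fun x => blockVariation_jump_add_le _ _ s e hμ
    _ ≤ _ := by
        rw [lintegral_add_right _ ((measurable_blockVariation
          (by fun_prop) fun i => hK.measurable_conv i (hgm i)).const_mul _),
          lintegral_const_mul' _ _ ofReal_ne_top]
        gcongr
        exact hK.lintegral_blockVariation_enorm_le hgm s e

-- Calderón–Zygmund interpolation: the part of `f` below height `μ` is handled in `L²`, the part
-- above it in `L¹`.
lemma lintegral_blockVariation_jump_le (s e : ℤ) {μ : ℝ} (hμ : 0 < μ) :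
    ∫⁻ x, blockVariation ({z | μ < ‖z‖}.indicator 1) (fun i => conv (K i) (f i) x) s e ≤
      (376448 * ENNReal.ofReal (A * Real.pi) ^ 2 + 2 * ENNReal.ofReal (A * Real.pi)) *
        ∑ i ∈ Finset.Ioc s e, ∫⁻ y, levelCost μ (f i y) := by
  set D := ENNReal.ofReal (A * Real.pi)
  set L := ∑ i ∈ Finset.Ioc s e, ∫⁻ y, levelCost μ (f i y)
  set u : ℤ → ℝ → ℂ := fun i => {y | ‖f i y‖ ≤ μ}.indicator (f i)
  set v : ℤ → ℝ → ℂ := fun i => {y | ‖f i y‖ ≤ μ}ᶜ.indicator (f i)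
  have hlow (i) : MeasurableSet {y | ‖f i y‖ ≤ μ} := measurableSet_le (hm i).norm measurable_const
  have hsplit (i) : f i = u i + v i := (Set.indicator_self_add_compl _ _).symm
  have hu_le : ∑ i ∈ Finset.Ioc s e, ∫⁻ y, ‖u i y‖ₑ ^ 2 ≤ ENNReal.ofReal (μ ^ 2) * L := by
    rw [Finset.mul_sum]
    exact Finset.sum_le_sum fun i _ => lintegral_enorm_indicator_sq_le _ hμ
  have hv_le : ∑ i ∈ Finset.Ioc s e, ∫⁻ y, ‖v i y‖ₑ ≤ ENNReal.ofReal μ * L := by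
    rw [Finset.mul_sum]
    exact Finset.sum_le_sum fun i _ => lintegral_enorm_indicator_compl_le _ hμ
  have hu_scale : (ENNReal.ofReal ((μ / 2) ^ 2))⁻¹ * ENNReal.ofReal (μ ^ 2) = 4 := by
    rw [mul_comm, ← div_eq_mul_inv, ← ENNReal.ofReal_div_of_pos (by positivity),
      div_pow, div_div_cancel₀ (by positivity), ENNReal.ofReal_pow zero_le_two,
      ENNReal.ofReal_ofNat]
    norm_num
  have hv_scale : ENNReal.ofReal (2 / μ) * ENNReal.ofReal μ = 2 := by
    rw [← ENNReal.ofReal_mul (by positivity), div_mul_cancel₀ _ hμ.ne', ENNReal.ofReal_ofNat]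
  calc _ = ∫⁻ x, blockVariation ({z | μ < ‖z‖}.indicator 1)
          (fun i => conv (K i) (u i + v i) x) s e := by simp only [← hsplit]
    _ ≤ (ENNReal.ofReal ((μ / 2) ^ 2))⁻¹ * (94112 * D ^ 2 * (ENNReal.ofReal (μ ^ 2) * L)) +
          ENNReal.ofReal (2 / μ) * (D * (ENNReal.ofReal μ * L)) := by
        refine (hK.lintegral_blockVariation_jump_le_of_add
          (fun i => (hm i).indicator (hlow i)) (fun i => (hi i).indicator (hlow i)) s e
          (fun i => (hm i).indicator (hlow i).compl)
          (fun i => (hi i).indicator (hlow i).compl) hμ).trans ?_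
        gcongr
    _ = (ENNReal.ofReal ((μ / 2) ^ 2))⁻¹ * ENNReal.ofReal (μ ^ 2) * (94112 * D ^ 2 * L) +
          ENNReal.ofReal (2 / μ) * ENNReal.ofReal μ * (D * L) := by ring
    _ = _ := by
        rw [hu_scale, hv_scale]
        ring

lemma lintegral_blockVariation_rpow_le (s e : ℤ) {r : ℝ} (hr1 : 1 < r) (hr2 : r < 2) :
    ∫⁻ x, blockVariation (‖·‖ₑ ^ r) (fun i => conv (K i) (f i) x) s e ≤
      ENNReal.ofReal r *
        (376448 * ENNReal.ofReal (A * Real.pi) ^ 2 + 2 * ENNReal.ofReal (A * Real.pi)) *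
        (ENNReal.ofReal (1 / (r - 1)) + ENNReal.ofReal (1 / (2 - r))) *
        ∑ i ∈ Finset.Ioc s e, ∫⁻ y, ‖f i y‖ₑ ^ r := by
  set C := 376448 * ENNReal.ofReal (A * Real.pi) ^ 2 + 2 * ENNReal.ofReal (A * Real.pi)
  set c := ENNReal.ofReal (1 / (r - 1)) + ENNReal.ofReal (1 / (2 - r))
  have hC_top : C ≠ ⊤ := by finiteness
  refine (lintegral_blockVariation_rpow_le_lintegral_jump
    (fun i => hK.measurable_conv i (hm i)) s e (by linarith)).trans ?_
  calc _ ≤ ENNReal.ofReal r * ∫⁻ t in Set.Ioi 0,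
          C * (∑ i ∈ Finset.Ioc s e, ∫⁻ y, levelCost t (f i y)) *
            ENNReal.ofReal (t ^ (r - 1)) := by
        gcongr ENNReal.ofReal r * ?_
        refine setLIntegral_mono' measurableSet_Ioi fun t ht => ?_
        gcongr
        exact hK.lintegral_blockVariation_jump_le hm hi s e ht
    _ = ENNReal.ofReal r * (C * ∑ i ∈ Finset.Ioc s e, ∫⁻ t in Set.Ioi 0,
          (∫⁻ y, levelCost t (f i y)) * ENNReal.ofReal (t ^ (r - 1))) := by
        simp only [mul_assoc, Finset.sum_mul]
        rw [lintegral_const_mul' _ _ hC_top, lintegral_finsetSum _ fun i _ => ?_]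
        exact ((measurable_levelCost.comp
          (measurable_fst.prodMk ((hm i).comp measurable_snd))).lintegral_prod_right').mul
            (by fun_prop)
    _ ≤ ENNReal.ofReal r * (C * ∑ i ∈ Finset.Ioc s e, c * ∫⁻ y, ‖f i y‖ₑ ^ r) := by
        gcongr with i _
        exact lintegral_lintegral_levelCost_le (hm i) hr1 hr2
    _ = _ := by rw [← Finset.mul_sum, ← mul_assoc, ← mul_assoc]

end IsLittlewoodPaleyFamily

lemma exists_lintegral_blockVariation_rpow_le {r : ℝ} (hr1 : 1 ≤ r) (hr2 : r < 2) (A : ℝ) :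
    ∃ C : ℝ≥0, ∀ K : ℤ → ℝ → ℂ, IsLittlewoodPaleyFamily A K → ∀ f : ℤ → ℝ → ℂ,
      (∀ i, Measurable (f i)) → (∀ i, Integrable (f i)) → ∀ s e : ℤ,
        ∫⁻ x, blockVariation (‖·‖ₑ ^ r) (fun i => conv (K i) (f i) x) s e ≤
          C * ∑ i ∈ Finset.Ioc s e, ∫⁻ y, ‖f i y‖ₑ ^ r := by
  rcases hr1.eq_or_lt with rfl | hr
  · refine ⟨(A * Real.pi).toNNReal, fun K hK f hm _ s e => ?_⟩
    simp only [ENNReal.rpow_one]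
    exact hK.lintegral_blockVariation_enorm_le hm s e
  · refine ⟨(ENNReal.ofReal r *
      (376448 * ENNReal.ofReal (A * Real.pi) ^ 2 + 2 * ENNReal.ofReal (A * Real.pi)) *
        (ENNReal.ofReal (1 / (r - 1)) + ENNReal.ofReal (1 / (2 - r)))).toNNReal,
      fun K hK f hm hi s e => ?_⟩
    rw [ENNReal.coe_toNNReal (by finiteness)]
    exact hK.lintegral_blockVariation_rpow_le hm hi s e hr hr2

/-! ### Stopping at dyadic averages -/

section DyadicAverage

/-- The average of `H` over the dyadic interval of generation `n` containing `x`. -/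
def dyadicAverage (H : ℝ → ℝ≥0∞) (n : ℤ) (x : ℝ) : ℝ≥0∞ :=
  ∫⁻ z, ENNReal.ofReal (dyadicKernel n x z) * H z

variable {H : ℝ → ℝ≥0∞} {n : ℤ} {x z : ℝ} {lam : ℝ≥0∞}

lemma dyadicAverage_le (H : ℝ → ℝ≥0∞) (n : ℤ) (x : ℝ) :
    dyadicAverage H n x ≤ ENNReal.ofReal (2 ^ n) * ∫⁻ z, H z := by
  rw [← lintegral_const_mul' _ _ ofReal_ne_top]
  unfold dyadicAverage
  gcongr with z
  exact dyadicKernel_le n x z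

lemma dyadicAverage_congr (h : dyadicIndex n x = dyadicIndex n z) :
    dyadicAverage H n x = dyadicAverage H n z := by
  simp only [dyadicAverage, dyadicKernel, h]

lemma measurable_dyadicAverage (hH : Measurable H) (n : ℤ) : Measurable (dyadicAverage H n) :=
  Measurable.lintegral_prod_right (f := fun x z => ENNReal.ofReal (dyadicKernel n x z) * H z)
    ((isSymmSubMarkov_dyadicKernel n).measurable.ennreal_ofReal.mul (hH.comp measurable_snd))

lemma dyadicAverage_add_one_le (H : ℝ → ℝ≥0∞) (n : ℤ) (x : ℝ) :
    dyadicAverage H (n + 1) x ≤ 2 * dyadicAverage H n x := by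
  have hkernel (z : ℝ) : dyadicKernel (n + 1) x z ≤ 2 * dyadicKernel n x z := by
    by_cases h : dyadicIndex (n + 1) x = dyadicIndex (n + 1) z
    · have h' := dyadicIndex_eq_of_le (lt_add_one n).le h
      simp only [dyadicKernel, h, h', if_true, zpow_add_one₀ (two_ne_zero' ℝ), mul_comm, le_rfl]
    · rw [dyadicKernel, if_neg h]
      exact mul_nonneg zero_le_two (dyadicKernel_nonneg n x z)
  unfold dyadicAverage
  rw [← lintegral_const_mul' _ _ ofNat_ne_top]
  refine lintegral_mono fun z => ?_
  rw [← mul_assoc, ← ENNReal.ofReal_ofNat 2, ← ENNReal.ofReal_mul zero_le_two]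
  gcongr
  exact hkernel z

lemma bddBelow_setOf_lt_dyadicAverage (hH : ∫⁻ z, H z < ⊤) (hlam : 0 < lam) (x : ℝ) :
    BddBelow {n | lam < dyadicAverage H n x} := by
  obtain ⟨k, hk⟩ := ENNReal.exists_nat_mul_gt hlam.ne' hH.ne
  refine ⟨-k, fun n (hn : lam < _) => le_of_not_gt fun hlt => hn.not_ge ?_⟩
  have hpow : (2 : ℝ) ^ n * k ≤ 1 := by
    calc (2 : ℝ) ^ n * k ≤ 2 ^ (-k : ℤ) * 2 ^ k := by
          gcongr
          · exact one_le_two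
          · exact_mod_cast k.lt_two_pow_self.le
      _ = 1 := by simp
  calc dyadicAverage H n x ≤ ENNReal.ofReal (2 ^ n) * (k * lam) :=
        (dyadicAverage_le H n x).trans (by gcongr)
    _ = ENNReal.ofReal (2 ^ n * k) * lam := by
        rw [ENNReal.ofReal_mul (by positivity), ENNReal.ofReal_natCast, mul_assoc]
    _ ≤ lam := mul_le_of_le_one_left' (ENNReal.ofReal_le_one.2 hpow)

lemma dyadicAverage_eq_lintegral_div (H : ℝ → ℝ≥0∞) (n : ℤ) (x : ℝ) :
    dyadicAverage H n x =
      (∫⁻ z in Set.Icc ((dyadicIndex n x : ℝ) / 2 ^ n) ((dyadicIndex n x + 1) / 2 ^ n), H z) /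
        volume (Set.Icc ((dyadicIndex n x : ℝ) / 2 ^ n) ((dyadicIndex n x + 1) / 2 ^ n)) := by
  have hvol : volume (Set.Icc ((dyadicIndex n x : ℝ) / 2 ^ n) ((dyadicIndex n x + 1) / 2 ^ n)) =
      (ENNReal.ofReal (2 ^ n))⁻¹ := by
    rw [Real.volume_Icc, ← ENNReal.ofReal_inv_of_pos (by positivity)]
    congr 1
    ring
  rw [hvol, div_eq_mul_inv, inv_inv, mul_comm, setLIntegral_congr Ico_ae_eq_Icc.symm,
    ← lintegral_const_mul' _ _ ofReal_ne_top, ← lintegral_indicator measurableSet_Ico]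
  unfold dyadicAverage
  congr 1 with z
  rw [dyadicKernel_eq_indicator]
  by_cases hz : z ∈ Set.Ico ((dyadicIndex n x : ℝ) / 2 ^ n) ((dyadicIndex n x + 1) / 2 ^ n)
  · simp only [Set.indicator_of_mem hz]
  · simp only [Set.indicator_of_notMem hz, ENNReal.ofReal_zero, zero_mul]

lemma ae_tendsto_dyadicAverage (hm : Measurable H) (hH : ∫⁻ z, H z < ⊤) :
    ∀ᵐ x, Filter.Tendsto (fun n : ℕ => dyadicAverage H n x) Filter.atTop (nhds (H x)) := by
  filter_upwards [VitaliFamily.ae_tendsto_lintegral_div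
    (IsUnifLocDoublingMeasure.vitaliFamily (volume : Measure ℝ) 1) hm.aemeasurable hH.ne] with x hx
  set a : ℕ → ℝ := fun n => (dyadicIndex n x : ℝ) / 2 ^ (n : ℤ)
  set b : ℕ → ℝ := fun n => (dyadicIndex n x + 1 : ℝ) / 2 ^ (n : ℤ)
  have hradius (n : ℕ) : (b n - a n) / 2 = (1 / 2) ^ (n + 1) := by
    simp only [a, b, zpow_natCast, pow_succ, one_div, inv_pow]
    ring
  have hlim : Filter.Tendsto (fun n => (b n - a n) / 2) Filter.atTop
      (nhdsWithin 0 (Set.Ioi 0)) := by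
    simp only [hradius, tendsto_nhdsWithin_iff]
    refine ⟨(_root_.tendsto_pow_atTop_nhds_zero_of_lt_one (by norm_num) (by norm_num)).comp
      (Filter.tendsto_add_atTop_nat 1), .of_forall fun n => ?_⟩
    exact pow_pos (by norm_num : (0 : ℝ) < 1 / 2) _
  have hshrink := IsUnifLocDoublingMeasure.tendsto_closedBall_filterAt (volume : Measure ℝ) (K := 1)
    (x := x) (fun n => (a n + b n) / 2) _ hlim (.of_forall fun n => by
      rw [one_mul, ← Real.Icc_eq_closedBall]
      exact Set.Ico_subset_Icc_self (dyadicIndex_eq_iff.1 rfl))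
  refine (hx.comp hshrink).congr fun n => ?_
  rw [Function.comp_apply, ← Real.Icc_eq_closedBall, dyadicAverage_eq_lintegral_div]

end DyadicAverage

/-- `ν x` is the first generation at which the dyadic average of `H` around `x` exceeds `lam`, and
`Ω` is the set of points where this ever happens; the value of `ν` off `Ω` is irrelevant. The
dyadic intervals of generation `ν x` around `x ∈ Ω` are the Calderón–Zygmund intervals. -/
structure IsDyadicStopping (H : ℝ → ℝ≥0∞) (lam : ℝ≥0∞) (Ω : Set ℝ) (ν : ℝ → ℤ) : Prop where
  measurableSet : MeasurableSet Ω
  measurable : Measurable ν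
  lt_average : ∀ x ∈ Ω, lam < dyadicAverage H (ν x) x
  average_le_of_lt : ∀ x ∈ Ω, ∀ n < ν x, dyadicAverage H n x ≤ lam
  average_le_of_notMem : ∀ x ∉ Ω, ∀ n, dyadicAverage H n x ≤ lam

lemma exists_isDyadicStopping {H : ℝ → ℝ≥0∞} (hm : Measurable H) (hH : ∫⁻ z, H z < ⊤)
    {lam : ℝ≥0∞} (hlam : 0 < lam) : ∃ Ω ν, IsDyadicStopping H lam Ω ν := by
  set E : ℝ → Set ℤ := fun x => {n | lam < dyadicAverage H n x}
  have hbdd (x : ℝ) : BddBelow (E x) := bddBelow_setOf_lt_dyadicAverage hH hlam x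
  have hE (n : ℤ) : MeasurableSet {x | n ∈ E x} :=
    measurableSet_lt measurable_const (measurable_dyadicAverage hm n)
  have hΩ : MeasurableSet {x | (E x).Nonempty} := by
    have : {x | (E x).Nonempty} = ⋃ n, {x | n ∈ E x} := by
      ext x
      simp only [Set.Nonempty, Set.mem_ofPred_eq, Set.mem_iUnion]
    exact this ▸ MeasurableSet.iUnion hE
  refine ⟨{x | (E x).Nonempty}, fun x => sInf (E x), hΩ, measurable_of_Iic fun n => ?_,
    fun x hx => Int.csInf_mem hx (hbdd x), fun x _ n hn => not_lt.1 fun h => ?_,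
    fun x hx n => not_lt.1 fun h => hx ⟨n, h⟩⟩
  · have : (fun x => sInf (E x)) ⁻¹' Set.Iic n =
        {x | (E x).Nonempty}.ite (⋃ m ∈ Set.Iic n, {x | m ∈ E x}) {_x | 0 ≤ n} := by
      ext x
      by_cases hx : (E x).Nonempty
      · have hle : sInf (E x) ≤ n ↔ ∃ m ≤ n, m ∈ E x :=
          ⟨fun h => ⟨_, h, Int.csInf_mem hx (hbdd x)⟩,
            fun ⟨m, hmn, hmE⟩ => (csInf_le (hbdd x) hmE).trans hmn⟩
        simp [Set.ite, hx, hle]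
      · simp [Set.ite, Set.not_nonempty_iff_eq_empty.1 hx, Int.csInf_empty]
    rw [this]
    exact hΩ.ite (.biUnion (Set.to_countable _) fun m _ => hE m) (.const _)
  · exact (csInf_le (hbdd x) h).not_gt hn

/-- The kernel averaging over the Calderón–Zygmund interval of a point of `Ω`, and vanishing
off `Ω`. -/
def stoppingKernel (Ω : Set ℝ) (ν : ℝ → ℤ) (y z : ℝ) : ℝ :=
  Ω.indicator (fun y => dyadicKernel (ν y) y z) y

section StoppingKernel

variable {Ω : Set ℝ} {ν : ℝ → ℤ} {y : ℝ}

lemma stoppingKernel_of_mem (hy : y ∈ Ω) : stoppingKernel Ω ν y = dyadicKernel (ν y) y :=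
  funext fun _ => Set.indicator_of_mem hy _

lemma stoppingKernel_of_notMem (hy : y ∉ Ω) : stoppingKernel Ω ν y = 0 :=
  funext fun _ => Set.indicator_of_notMem hy _

lemma stoppingKernel_le (y z : ℝ) : stoppingKernel Ω ν y z ≤ 2 ^ ν y :=
  Set.indicator_apply_le' (fun _ => dyadicKernel_le _ y z) fun _ => by positivity

lemma kernelOp_stoppingKernel_of_mem (hy : y ∈ Ω) (h : ℝ → ℂ) :
    kernelOp (stoppingKernel Ω ν) h y = kernelOp (dyadicKernel (ν y)) h y := by
  rw [kernelOp, stoppingKernel_of_mem hy, kernelOp]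

lemma kernelOp_stoppingKernel_of_notMem (hy : y ∉ Ω) (h : ℝ → ℂ) :
    kernelOp (stoppingKernel Ω ν) h y = 0 := by
  simp only [kernelOp, stoppingKernel_of_notMem hy, Pi.zero_apply, Complex.ofReal_zero, zero_mul,
    integral_zero]

end StoppingKernel

namespace IsDyadicStopping

variable {H : ℝ → ℝ≥0∞} {lam : ℝ≥0∞} {Ω : Set ℝ} {ν : ℝ → ℤ} (hS : IsDyadicStopping H lam Ω ν)
include hS

lemma mem_and_eq_of_dyadicIndex_eq {y z : ℝ} (hy : y ∈ Ω)
    (h : dyadicIndex (ν y) y = dyadicIndex (ν y) z) : z ∈ Ω ∧ ν z = ν y := by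
  have hz : z ∈ Ω := by
    by_contra hz
    exact (dyadicAverage_congr h ▸ hS.lt_average y hy).not_ge (hS.average_le_of_notMem z hz _)
  refine ⟨hz, le_antisymm (le_of_not_gt fun hlt => ?_) (le_of_not_gt fun hlt => ?_)⟩
  · exact (dyadicAverage_congr h ▸ hS.lt_average y hy).not_ge (hS.average_le_of_lt z hz _ hlt)
  · exact (dyadicAverage_congr (dyadicIndex_eq_of_le hlt.le h) ▸
      hS.average_le_of_lt y hy _ hlt).not_gt (hS.lt_average z hz)

lemma isSymmSubMarkov : IsSymmSubMarkov (stoppingKernel Ω ν) where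
  measurable := by
    have hpow : Measurable fun p : ℝ × ℝ => (2 : ℝ) ^ ν p.1 :=
      (measurable_of_countable fun n : ℤ => (2 : ℝ) ^ n).comp (hS.measurable.comp measurable_fst)
    have hindicator : Function.uncurry (stoppingKernel Ω ν) =
        (Prod.fst ⁻¹' Ω).indicator fun p => dyadicKernel (ν p.1) p.1 p.2 := rfl
    rw [hindicator]
    refine Measurable.indicator (Measurable.ite (measurableSet_eq_fun ?_ ?_) hpow measurable_const)
      (measurable_fst hS.measurableSet)
    · exact Int.measurable_floor.comp (hpow.mul measurable_fst)
    · exact Int.measurable_floor.comp (hpow.mul measurable_snd)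
  nonneg y z := Set.indicator_apply_nonneg fun _ => dyadicKernel_nonneg _ _ _
  symm := by
    have key (y z : ℝ) (hne : stoppingKernel Ω ν y z ≠ 0) :
        stoppingKernel Ω ν y z = stoppingKernel Ω ν z y := by
      have hy : y ∈ Ω := Set.mem_of_indicator_ne_zero hne
      have hidx : dyadicIndex (ν y) y = dyadicIndex (ν y) z := by
        by_contra hidx
        exact hne (by rw [stoppingKernel_of_mem hy, dyadicKernel, if_neg hidx])
      obtain ⟨hz, hν⟩ := hS.mem_and_eq_of_dyadicIndex_eq hy hidx
      rw [stoppingKernel_of_mem hy, stoppingKernel_of_mem hz, hν,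
        (isSymmSubMarkov_dyadicKernel _).symm]
    intro y z
    by_cases h : stoppingKernel Ω ν y z = 0
    · by_contra hne
      exact hne (key z y fun h' => hne (h.trans h'.symm)).symm
    · exact key y z h
  mass_le y := by
    by_cases hy : y ∈ Ω
    · rw [stoppingKernel_of_mem hy, lintegral_dyadicKernel]
    · simp [stoppingKernel_of_notMem hy]

lemma lintegral_stoppingKernel_mul_le {y : ℝ} (hy : y ∈ Ω) :
    ∫⁻ z, ENNReal.ofReal (stoppingKernel Ω ν y z) * H z ≤ 2 * lam := by
  rw [stoppingKernel_of_mem hy]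
  calc dyadicAverage H (ν y) y ≤ 2 * dyadicAverage H (ν y - 1) y := by
        simpa only [sub_add_cancel] using dyadicAverage_add_one_le H (ν y - 1) y
    _ ≤ 2 * lam := by
        gcongr
        exact hS.average_le_of_lt y hy _ (sub_one_lt _)

lemma mul_volume_le (hm : Measurable H) : lam * volume Ω ≤ ∫⁻ z, H z := by
  calc lam * volume Ω = ∫⁻ _ in Ω, lam := (setLIntegral_const _ _).symm
    _ ≤ ∫⁻ y in Ω, ∫⁻ z, ENNReal.ofReal (stoppingKernel Ω ν y z) * H z := by
        refine setLIntegral_mono' hS.measurableSet fun y hy => ?_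
        rw [stoppingKernel_of_mem hy]
        exact (hS.lt_average y hy).le
    _ ≤ ∫⁻ z, H z :=
        (setLIntegral_le_lintegral Ω _).trans (hS.isSymmSubMarkov.lintegral_lintegral_le hm)

lemma ae_le_of_notMem (hm : Measurable H) (hH : ∫⁻ z, H z < ⊤) : ∀ᵐ x, x ∉ Ω → H x ≤ lam := by
  filter_upwards [ae_tendsto_dyadicAverage hm hH] with x hx hxΩ
  exact le_of_tendsto' hx fun n => hS.average_le_of_notMem x hxΩ n

end IsDyadicStopping

/-! ### Sequence-valued functions -/

/-- The pointwise `ℓʳ` norm of a sequence of functions, whose integral is `mixedNorm1 r f`. -/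
def seqNorm (r : ℝ) (f : ℤ → ℝ → ℂ) (x : ℝ) : ℝ≥0∞ := (∑' i, ‖f i x‖ₑ ^ r) ^ (1 / r)

lemma lintegral_seqNorm (r : ℝ) (f : ℤ → ℝ → ℂ) : ∫⁻ x, seqNorm r f x = mixedNorm1 r f := by
  simp only [seqNorm, mixedNorm1, ofReal_norm]

section SeqNorm

variable {r : ℝ} {f : ℤ → ℝ → ℂ}

lemma measurable_seqNorm (hm : ∀ i, Measurable (f i)) : Measurable (seqNorm r f) :=
  (Measurable.tsum fun i => (hm i).enorm.pow_const r).pow_const _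

lemma sum_enorm_rpow_le_seqNorm_rpow (hr : 0 < r) (I : Finset ℤ) (x : ℝ) :
    ∑ i ∈ I, ‖f i x‖ₑ ^ r ≤ seqNorm r f x ^ r := by
  rw [seqNorm, one_div, ENNReal.rpow_inv_rpow hr.ne']
  exact ENNReal.sum_le_tsum I

lemma rpow_sum_enorm_le_seqNorm (hr : 0 < r) (I : Finset ℤ) (x : ℝ) :
    (∑ i ∈ I, ‖f i x‖ₑ ^ r) ^ (1 / r) ≤ seqNorm r f x :=
  ENNReal.rpow_le_rpow (ENNReal.sum_le_tsum I) (by positivity)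

lemma enorm_le_seqNorm (hr : 0 < r) (i : ℤ) (x : ℝ) : ‖f i x‖ₑ ≤ seqNorm r f x := by
  simpa [ENNReal.rpow_rpow_inv hr.ne'] using rpow_sum_enorm_le_seqNorm (f := f) hr {i} x

lemma integrable_of_lintegral_seqNorm_lt_top (hr : 0 < r) (hm : ∀ i, Measurable (f i))
    (hf : ∫⁻ x, seqNorm r f x < ⊤) (i : ℤ) : Integrable (f i) :=
  ⟨(hm i).aestronglyMeasurable, (lintegral_mono fun x => enorm_le_seqNorm hr i x).trans_lt hf⟩

end SeqNorm

section Minkowski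

variable {α ι : Type*} {r : ℝ} (hr : 1 ≤ r)
include hr

lemma rpow_sum_enorm_integral_le {E : Type*} [NormedAddCommGroup E] [NormedSpace ℝ E]
    [CompleteSpace E] [MeasurableSpace α] {μ : Measure α} (I : Finset ι) {g : ι → α → E}
    (hg : ∀ i, Integrable (g i) μ) :
    (∑ i ∈ I, ‖∫ x, g i x ∂μ‖ₑ ^ r) ^ (1 / r) ≤
      ∫⁻ x, (∑ i ∈ I, ‖g i x‖ₑ ^ r) ^ (1 / r) ∂μ := by
  have : Fact (1 ≤ ENNReal.ofReal r) := ⟨ENNReal.one_le_ofReal.2 hr⟩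
  have hr0 : 0 < (ENNReal.ofReal r).toReal := by
    rw [ENNReal.toReal_ofReal] <;> linarith
  have henorm (v : PiLp (ENNReal.ofReal r) fun _ : I => E) :
      ‖v‖ₑ = (∑ i : I, ‖v i‖ₑ ^ r) ^ (1 / r) := by
    rw [← edist_zero_right, PiLp.edist_eq_sum hr0, ENNReal.toReal_ofReal (by linarith)]
    simp only [PiLp.zero_apply, edist_zero_right]
  simp only [← Finset.sum_coe_sort I]
  set v : α → PiLp (ENNReal.ofReal r) fun _ : I => E :=
    fun x => WithLp.toLp _ fun i => g i x
  calc _ = ‖∫ x, v x ∂μ‖ₑ := by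
        rw [henorm]
        simp only [eval_integral_piLp (f := v) fun i => hg i, v]
    _ ≤ ∫⁻ x, ‖v x‖ₑ ∂μ := enorm_integral_le_lintegral_enorm v
    _ = _ := by simp only [henorm, v]

variable [MeasureSpace α] {κ : α → α → ℝ}

lemma IsSymmSubMarkov.rpow_sum_enorm_kernelOp_le (hκ : IsSymmSubMarkov κ) {B : ℝ} {x : α}
    (hB : ∀ z, κ x z ≤ B) (I : Finset ι) {h : ι → α → ℂ} (hh : ∀ i, Integrable (h i)) :
    (∑ i ∈ I, ‖kernelOp κ (h i) x‖ₑ ^ r) ^ (1 / r) ≤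
      ∫⁻ z, ENNReal.ofReal (κ x z) * (∑ i ∈ I, ‖h i z‖ₑ ^ r) ^ (1 / r) := by
  have hr0 : 0 < r := by linarith
  refine (rpow_sum_enorm_integral_le hr I fun i => hκ.integrable_mul hB (hh i)).trans_eq ?_
  congr 1 with z
  simp only [enorm_ofReal_mul (hκ.nonneg x z), ENNReal.mul_rpow_of_nonneg _ _ hr0.le]
  rw [← Finset.mul_sum, ENNReal.mul_rpow_of_nonneg _ _ (by positivity), one_div,
    ENNReal.rpow_rpow_inv hr0.ne']

end Minkowski

/-! ### The Calderón–Zygmund decomposition -/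

/-- The good part of `h`: it agrees with `h` off `Ω`, and is averaged over each stopping
interval. -/
def goodPart (Ω : Set ℝ) (ν : ℝ → ℤ) (h : ℝ → ℂ) : ℝ → ℂ :=
  Ωᶜ.indicator h + kernelOp (stoppingKernel Ω ν) h

/-- The bad part of `h`: it is supported in `Ω` and has mean zero on each stopping interval. -/
def badPart (Ω : Set ℝ) (ν : ℝ → ℤ) (h : ℝ → ℂ) : ℝ → ℂ :=
  Ω.indicator h - kernelOp (stoppingKernel Ω ν) h

lemma goodPart_add_badPart (Ω : Set ℝ) (ν : ℝ → ℤ) (h : ℝ → ℂ) :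
    goodPart Ω ν h + badPart Ω ν h = h := by
  rw [goodPart, badPart, add_add_sub_cancel, Set.indicator_compl_add_self]

namespace IsDyadicStopping

variable {H : ℝ → ℝ≥0∞} {lam : ℝ≥0∞} {Ω : Set ℝ} {ν : ℝ → ℤ} (hS : IsDyadicStopping H lam Ω ν)
include hS

lemma measurable_goodPart {h : ℝ → ℂ} (hm : Measurable h) : Measurable (goodPart Ω ν h) :=
  (hm.indicator hS.measurableSet.compl).add (hS.isSymmSubMarkov.measurable_kernelOp hm)

lemma integrable_goodPart {h : ℝ → ℂ} (hm : Measurable h) (hi : Integrable h) :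
    Integrable (goodPart Ω ν h) :=
  (hi.indicator hS.measurableSet.compl).add (hS.isSymmSubMarkov.integrable_kernelOp hm hi)

lemma integrable_badPart {h : ℝ → ℂ} (hm : Measurable h) (hi : Integrable h) :
    Integrable (badPart Ω ν h) :=
  (hi.indicator hS.measurableSet).sub (hS.isSymmSubMarkov.integrable_kernelOp hm hi)

end IsDyadicStopping

lemma rpow_le_rpow_sub_one_mul {a b : ℝ≥0∞} {r : ℝ} (hr : 1 ≤ r) (hab : a ≤ b) :
    a ^ r ≤ b ^ (r - 1) * a := by
  calc a ^ r = a ^ (r - 1) * a ^ (1 : ℝ) := by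
        rw [← ENNReal.rpow_add_of_nonneg _ _ (by linarith) zero_le_one, sub_add_cancel]
    _ ≤ b ^ (r - 1) * a := by
        rw [ENNReal.rpow_one]
        gcongr

section GoodPart

variable {r : ℝ} (hr : 1 ≤ r) {f : ℤ → ℝ → ℂ} {lam : ℝ≥0∞} {Ω : Set ℝ} {ν : ℝ → ℤ} {x : ℝ}
include hr

lemma sum_enorm_goodPart_rpow_le_of_notMem (hx : x ∉ Ω) (hlam : seqNorm r f x ≤ lam)
    (I : Finset ℤ) :
    ∑ i ∈ I, ‖goodPart Ω ν (f i) x‖ₑ ^ r ≤ lam ^ (r - 1) * seqNorm r f x := by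
  simp only [goodPart, Pi.add_apply, kernelOp_stoppingKernel_of_notMem hx, add_zero,
    Set.indicator_of_mem (Set.mem_compl hx)]
  exact (sum_enorm_rpow_le_seqNorm_rpow (by linarith) I x).trans
    (rpow_le_rpow_sub_one_mul hr hlam)

lemma IsDyadicStopping.sum_enorm_goodPart_rpow_le_of_mem
    (hS : IsDyadicStopping (seqNorm r f) lam Ω ν) (hi : ∀ i, Integrable (f i)) (hx : x ∈ Ω)
    (I : Finset ℤ) :
    ∑ i ∈ I, ‖goodPart Ω ν (f i) x‖ₑ ^ r ≤ (2 * lam) ^ (r - 1) *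
      ∫⁻ z, ENNReal.ofReal (stoppingKernel Ω ν x z) * seqNorm r f z := by
  have hr0 : 0 < r := by linarith
  simp only [goodPart, Pi.add_apply, Set.indicator_of_notMem (Set.notMem_compl_iff.2 hx), zero_add]
  have hminkowski : (∑ i ∈ I, ‖kernelOp (stoppingKernel Ω ν) (f i) x‖ₑ ^ r) ^ (1 / r) ≤
      ∫⁻ z, ENNReal.ofReal (stoppingKernel Ω ν x z) * seqNorm r f z := by
    refine (hS.isSymmSubMarkov.rpow_sum_enorm_kernelOp_le hr (stoppingKernel_le x) I hi).trans ?_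
    gcongr with z
    exact rpow_sum_enorm_le_seqNorm hr0 I z
  refine le_trans ?_ (rpow_le_rpow_sub_one_mul hr (hS.lintegral_stoppingKernel_mul_le hx))
  rwa [one_div, ENNReal.rpow_inv_le_iff hr0] at hminkowski

lemma IsDyadicStopping.sum_lintegral_enorm_goodPart_rpow_le
    (hS : IsDyadicStopping (seqNorm r f) lam Ω ν) (hm : ∀ i, Measurable (f i))
    (hf : ∫⁻ x, seqNorm r f x < ⊤) (hlam : lam < ⊤) (I : Finset ℤ) :
    ∑ i ∈ I, ∫⁻ x, ‖goodPart Ω ν (f i) x‖ₑ ^ r ≤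
      (2 * lam) ^ (r - 1) * (2 * ∫⁻ x, seqNorm r f x) := by
  have hH : Measurable (seqNorm r f) := measurable_seqNorm hm
  have hi := integrable_of_lintegral_seqNorm_lt_top (by linarith) hm hf
  set M : ℝ → ℝ≥0∞ := fun x => ∫⁻ z, ENNReal.ofReal (stoppingKernel Ω ν x z) * seqNorm r f z
  have hpoint : ∀ᵐ x, ∑ i ∈ I, ‖goodPart Ω ν (f i) x‖ₑ ^ r ≤
      (2 * lam) ^ (r - 1) * (seqNorm r f x + M x) := by
    filter_upwards [hS.ae_le_of_notMem hH hf] with x hx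
    by_cases hxΩ : x ∈ Ω
    · exact (hS.sum_enorm_goodPart_rpow_le_of_mem hr hi hxΩ I).trans (by gcongr; exact le_add_self)
    · refine (sum_enorm_goodPart_rpow_le_of_notMem hr hxΩ (hx hxΩ) I).trans ?_
      gcongr
      · exact le_mul_of_one_le_left zero_le one_le_two
      · exact le_self_add
  calc ∑ i ∈ I, ∫⁻ x, ‖goodPart Ω ν (f i) x‖ₑ ^ r
      = ∫⁻ x, ∑ i ∈ I, ‖goodPart Ω ν (f i) x‖ₑ ^ r :=
        (lintegral_finsetSum _ fun i _ =>
          (hS.measurable_goodPart (hm i)).enorm.pow_const r).symm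
    _ ≤ ∫⁻ x, (2 * lam) ^ (r - 1) * (seqNorm r f x + M x) := lintegral_mono_ae hpoint
    _ = (2 * lam) ^ (r - 1) * ((∫⁻ x, seqNorm r f x) + ∫⁻ x, M x) := by
        rw [lintegral_const_mul' _ _ (by finiteness), lintegral_add_left hH]
    _ ≤ _ := by
        rw [two_mul (∫⁻ x, seqNorm r f x)]
        gcongr _ * (_ + ?_)
        exact hS.isSymmSubMarkov.lintegral_lintegral_le hH

end GoodPart

/-- The union of the (enlarged) stopping intervals: the exceptional set off which the bad parts are
controlled by cancellation. -/
def enlargement (Ω : Set ℝ) (ν : ℝ → ℤ) : Set ℝ := {x | ∃ z ∈ Ω, (2 : ℝ) ^ ν z * |x - z| < 2}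

lemma measurable_ofReal_mul_bumpAt_zpow_sub {ν : ℝ → ℤ} (hν : Measurable ν) (c : ℝ) :
    Measurable fun p : ℝ × ℝ => ENNReal.ofReal (c * bumpAt (2 ^ ν p.2) (p.1 - p.2)) := by
  have hbump : Measurable fun q : ℤ × ℝ => bumpAt (2 ^ q.1) q.2 :=
    measurable_from_prod_countable_right fun n => (continuous_bumpAt (2 ^ n)).measurable
  exact ((hbump.comp ((hν.comp measurable_snd).prodMk
    (measurable_fst.sub measurable_snd))).const_mul c).ennreal_ofReal

lemma one_le_mul_bump {u : ℝ} (hu : |u| ≤ 3) : 1 ≤ 10 * bump u := by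
  have := sq_le_sq' (abs_le.1 hu).1 (abs_le.1 hu).2
  rw [bump, ← div_eq_mul_inv, le_div_iff₀ (by positivity)]
  linarith

lemma dyadicKernel_le_mul_bumpAt {n : ℤ} {x z w : ℝ} (hxz : (2 : ℝ) ^ n * |x - z| < 2) :
    dyadicKernel n z w ≤ 10 * bumpAt (2 ^ n) (x - w) := by
  have hn : (0 : ℝ) < 2 ^ n := by positivity
  rw [dyadicKernel]
  split_ifs with h
  · have hnear : |2 ^ n * (x - w)| ≤ 3 := by
      rw [abs_mul, abs_of_pos hn]
      calc (2 : ℝ) ^ n * |x - w| ≤ 2 ^ n * (|x - z| + |z - w|) := by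
            gcongr
            exact abs_sub_le x z w
        _ ≤ 3 := by linarith [two_zpow_mul_abs_sub_le_one h]
    calc (2 : ℝ) ^ n ≤ 2 ^ n * (10 * bump (2 ^ n * (x - w))) :=
          le_mul_of_one_le_right hn.le (one_le_mul_bump hnear)
      _ = _ := mul_left_comm _ _ _
  · exact mul_nonneg (by norm_num) (bumpAt_nonneg hn.le _)

/-- A majorant, when `|t| ≥ 2 ^ (1 - n)`, of the oscillation of the `i`-th kernel of a
Littlewood–Paley family over an interval of length `2 ^ (-n)` containing `t`. -/
def cancellationKernel (A : ℝ) (n i : ℤ) (t : ℝ) : ℝ :=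
  10 * A * (1 / 2) ^ (i - n).natAbs * bumpAt (2 ^ min i n) t

lemma mul_bump_mul_le {q u : ℝ} (hq : 1 ≤ q) (hu : 2 ≤ |u|) :
    q * bump (q * u) ≤ 2 * q⁻¹ * bump u := by
  have hu2 : 4 ≤ u ^ 2 := by
    rw [← sq_abs]
    nlinarith
  have : 0 < q := by linarith
  rw [bump, bump, ← div_eq_mul_inv, ← div_eq_mul_inv, ← div_eq_mul_inv, div_div,
    div_le_div_iff₀ (by positivity) (by positivity)]
  nlinarith [mul_nonneg (sq_nonneg q) (sq_nonneg u), mul_le_mul_of_nonneg_left hu2 (sq_nonneg q)]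

lemma bump_le_four_mul {s t : ℝ} (h : |t| ≤ 2 * |s|) : bump s ≤ 4 * bump t := by
  have hsq : t ^ 2 ≤ 4 * s ^ 2 := by
    rw [← sq_abs t, ← sq_abs s]
    nlinarith [abs_nonneg t, abs_nonneg s]
  rw [bump, bump, inv_le_iff_one_le_mul₀ (by positivity), mul_right_comm, ← div_eq_mul_inv,
    le_div_iff₀ (by positivity)]
  linarith

namespace IsLittlewoodPaleyFamily

variable {A : ℝ} {K : ℤ → ℝ → ℂ} (hK : IsLittlewoodPaleyFamily A K) {n i : ℤ} {s t : ℝ}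
include hK

lemma norm_sub_le_cancellationKernel_of_le (hin : i ≤ n) (hst : (2 : ℝ) ^ n * |s - t| ≤ 1) :
    ‖K i s - K i t‖ ≤ cancellationKernel A n i t := by
  have hA := hK.nonneg
  have hpow : (2 : ℝ) ^ i = (1 / 2) ^ (i - n).natAbs * 2 ^ n := by
    rw [one_div, inv_pow, ← zpow_natCast, ← zpow_neg, ← zpow_add₀ (two_ne_zero' ℝ)]
    congr 1
    lia
  have hclose : (2 : ℝ) ^ i * |s - t| ≤ (1 / 2) ^ (i - n).natAbs := by
    rw [hpow, mul_assoc]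
    exact mul_le_of_le_one_right (by positivity) hst
  have hone : (2 : ℝ) ^ i * |s - t| ≤ 1 :=
    hclose.trans (pow_le_one₀ (by norm_num) (by norm_num))
  have := bumpAt_nonneg (zpow_nonneg zero_le_two i) t
  rw [cancellationKernel, min_eq_left hin]
  refine (hK.norm_sub_le i s t hone).trans ?_
  gcongr
  linarith

lemma norm_sub_le_cancellationKernel_of_ge (hni : n ≤ i) (hst : (2 : ℝ) ^ n * |s - t| ≤ 1)
    (ht : 2 ≤ (2 : ℝ) ^ n * |t|) : ‖K i s - K i t‖ ≤ cancellationKernel A n i t := by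
  have hA := hK.nonneg
  have hn : (0 : ℝ) < 2 ^ n := by positivity
  have hi : (0 : ℝ) < 2 ^ i := by positivity
  set q : ℝ := 2 ^ (i - n).natAbs with hqdef
  have hpow : (2 : ℝ) ^ i = q * 2 ^ n := by
    rw [hqdef, ← zpow_natCast (2 : ℝ), ← zpow_add₀ (two_ne_zero' ℝ)]
    congr 1
    lia
  have hq : (1 : ℝ) ≤ q := one_le_pow₀ one_le_two
  have hts : |t| ≤ 2 * |s| := by
    have htri : |t| ≤ |s| + |s - t| := by
      linarith [abs_sub_abs_le_abs_sub t s, abs_sub_comm t s]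
    have : 2 * |s - t| ≤ |t| := le_of_mul_le_mul_left (by linarith) hn
    linarith
  have hs : bumpAt (2 ^ i) s ≤ 4 * bumpAt (2 ^ i) t := by
    rw [bumpAt, bumpAt, mul_left_comm]
    gcongr
    refine bump_le_four_mul ?_
    rw [abs_mul, abs_mul, abs_of_pos hi, mul_left_comm]
    gcongr
  have ht : bumpAt (2 ^ i) t ≤ 2 * q⁻¹ * bumpAt (2 ^ n) t := by
    have := mul_bump_mul_le hq (u := 2 ^ n * t) (by rwa [abs_mul, abs_of_pos hn])
    rw [bumpAt, bumpAt, hpow]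
    calc q * 2 ^ n * bump (q * 2 ^ n * t) = 2 ^ n * (q * bump (q * (2 ^ n * t))) := by ring_nf
      _ ≤ 2 ^ n * (2 * q⁻¹ * bump (2 ^ n * t)) := by gcongr
      _ = _ := by ring
  calc ‖K i s - K i t‖ ≤ A * bumpAt (2 ^ i) s + A * bumpAt (2 ^ i) t :=
        (_root_.norm_sub_le _ _).trans (add_le_add (hK.norm_le i s) (hK.norm_le i t))
    _ ≤ A * (4 * bumpAt (2 ^ i) t) + A * bumpAt (2 ^ i) t := by gcongr
    _ = 5 * A * bumpAt (2 ^ i) t := by ring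
    _ ≤ 5 * A * (2 * q⁻¹ * bumpAt (2 ^ n) t) := by gcongr
    _ = cancellationKernel A n i t := by
        rw [cancellationKernel, min_eq_right hni, one_div, inv_pow]
        ring

lemma norm_sub_le_cancellationKernel (hst : (2 : ℝ) ^ n * |s - t| ≤ 1)
    (ht : 2 ≤ (2 : ℝ) ^ n * |t|) : ‖K i s - K i t‖ ≤ cancellationKernel A n i t :=
  (le_total i n).elim (fun h => hK.norm_sub_le_cancellationKernel_of_le h hst)
    fun h => hK.norm_sub_le_cancellationKernel_of_ge h hst ht

end IsLittlewoodPaleyFamily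

lemma lintegral_cancellationKernel_sub_right {A : ℝ} (hA : 0 ≤ A) (n i : ℤ) (z : ℝ) :
    ∫⁻ x, ENNReal.ofReal (cancellationKernel A n i (x - z)) =
      ENNReal.ofReal (10 * A * Real.pi) * ENNReal.ofReal ((1 / 2) ^ (i - n).natAbs) := by
  simp only [cancellationKernel]
  rw [lintegral_mul_bumpAt_sub_right (by positivity) (by positivity),
    ← ENNReal.ofReal_mul (by positivity)]
  congr 1
  ring

lemma measurable_cancellationKernel (A : ℝ) (n i : ℤ) : Measurable (cancellationKernel A n i) :=
  (continuous_bumpAt (2 ^ min i n)).measurable.const_mul (10 * A * (1 / 2) ^ (i - n).natAbs)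

lemma measurable_cancellationKernel_sub {ν : ℝ → ℤ} (hν : Measurable ν) (A : ℝ) (i : ℤ) :
    Measurable fun p : ℝ × ℝ => ENNReal.ofReal (cancellationKernel A (ν p.2) i (p.1 - p.2)) := by
  have hkernel : Measurable fun q : ℤ × ℝ => cancellationKernel A q.1 i q.2 :=
    measurable_from_prod_countable_right fun n => measurable_cancellationKernel A n i
  exact (hkernel.comp ((hν.comp measurable_snd).prodMk
    (measurable_fst.sub measurable_snd))).ennreal_ofReal

namespace IsSymmSubMarkov

variable {α : Type*} [MeasureSpace α] {κ : α → α → ℝ} (hκ : IsSymmSubMarkov κ)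
include hκ

lemma norm_kernelOp_le {W : α → ℂ} {B : ℝ} (hB : ∀ z, ‖W z‖ ≤ B) (x : α) :
    ‖kernelOp κ W x‖ ≤ B := by
  have hB0 : 0 ≤ B := (norm_nonneg _).trans (hB x)
  rw [← ENNReal.ofReal_le_ofReal_iff hB0, ofReal_norm]
  calc ‖kernelOp κ W x‖ₑ ≤ ∫⁻ z, ENNReal.ofReal (κ x z) * ‖W z‖ₑ := hκ.enorm_kernelOp_le W x
    _ ≤ ∫⁻ z, ENNReal.ofReal (κ x z) * ENNReal.ofReal B := by
        gcongr with z
        exact enorm_le_ofReal (hB z)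
    _ ≤ ENNReal.ofReal B := by
        rw [lintegral_mul_const' _ _ ofReal_ne_top]
        exact mul_le_of_le_one_left zero_le (hκ.mass_le x)

lemma integral_mul_indicator_sub_kernelOp [SFinite (volume : Measure α)] {h W : α → ℂ}
    (hm : Measurable h) (hh : Integrable h) (hW : Measurable W) {B : ℝ} (hB : ∀ z, ‖W z‖ ≤ B)
    {Ω : Set α} (hΩ : MeasurableSet Ω) :
    ∫ y, W y * (Ω.indicator h - kernelOp κ h) y =
      ∫ z, (Ω.indicator W - kernelOp κ W) z * h z := by
  have hInt {V g : α → ℂ} (hV : Measurable V) (hVB : ∀ z, ‖V z‖ ≤ B) (hg : Integrable g) :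
      Integrable fun z => V z * g z := hg.bdd_mul hV.aestronglyMeasurable (.of_forall hVB)
  have hind (z : α) : Ω.indicator W z * h z = W z * Ω.indicator h z := by
    by_cases hz : z ∈ Ω
    · simp only [Set.indicator_of_mem hz]
    · simp only [Set.indicator_of_notMem hz, zero_mul, mul_zero]
  simp only [Pi.sub_apply, mul_sub, sub_mul, hind]
  rw [integral_sub (hInt hW hB (hh.indicator hΩ)) (hInt hW hB (hκ.integrable_kernelOp hm hh)),
    integral_sub (hInt hW hB (hh.indicator hΩ))
      (hInt (hκ.measurable_kernelOp hW) (hκ.norm_kernelOp_le hB) hh),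
    hκ.integral_mul_kernelOp hm hh hW hB]

end IsSymmSubMarkov

namespace IsLittlewoodPaleyFamily

variable {A : ℝ} {K : ℤ → ℝ → ℂ} (hK : IsLittlewoodPaleyFamily A K)
include hK

lemma integrable (i : ℤ) : Integrable (K i) :=
  (((integrable_bump.comp_mul_left' (zpow_pos two_pos i).ne').const_mul _).const_mul A).mono'
    (hK.continuous i).aestronglyMeasurable (.of_forall (hK.norm_le i))

lemma enorm_indicator_sub_kernelOp_le {Ω : Set ℝ} {ν : ℝ → ℤ} {x : ℝ}
    (hx : x ∉ enlargement Ω ν) (i : ℤ) (z : ℝ) :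
    ‖(Ω.indicator (fun y => K i (x - y)) -
      kernelOp (stoppingKernel Ω ν) (fun y => K i (x - y))) z‖ₑ ≤
      ENNReal.ofReal (cancellationKernel A (ν z) i (x - z)) := by
  by_cases hz : z ∈ Ω
  · rw [Pi.sub_apply, Set.indicator_of_mem hz, kernelOp_stoppingKernel_of_mem hz]
    have hfar : 2 ≤ (2 : ℝ) ^ ν z * |x - z| := not_lt.1 fun h => hx ⟨z, hz, h⟩
    refine enorm_sub_kernelOp_dyadicKernel_le ((hK.integrable i).comp_sub_left x) fun w hw => ?_
    rw [← edist_eq_enorm_sub, edist_comm, edist_eq_enorm_sub]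
    refine enorm_le_ofReal (hK.norm_sub_le_cancellationKernel ?_ hfar)
    rw [_root_.sub_sub_sub_cancel_left]
    exact two_zpow_mul_abs_sub_le_one hw
  · rw [Pi.sub_apply, Set.indicator_of_notMem hz, kernelOp_stoppingKernel_of_notMem hz, sub_zero,
      enorm_zero]
    exact zero_le

end IsLittlewoodPaleyFamily

namespace IsDyadicStopping

variable {H : ℝ → ℝ≥0∞} {lam : ℝ≥0∞} {Ω : Set ℝ} {ν : ℝ → ℤ} (hS : IsDyadicStopping H lam Ω ν)
include hS

lemma volume_enlargement_le :
    volume (enlargement Ω ν) ≤ ENNReal.ofReal (10 * Real.pi) * volume Ω := by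
  set k : ℝ → ℝ → ℝ≥0∞ := fun x w => ENNReal.ofReal (10 * bumpAt (2 ^ ν w) (x - w))
  set T : ℝ → ℝ≥0∞ := fun x => ∫⁻ w, k x w * Ω.indicator 1 w
  have hk : Measurable (Function.uncurry k) :=
    measurable_ofReal_mul_bumpAt_zpow_sub hS.measurable 10
  have hind : Measurable (Ω.indicator (1 : ℝ → ℝ≥0∞)) := measurable_one.indicator hS.measurableSet
  have hT : Measurable T := (hk.mul (hind.comp measurable_snd)).lintegral_prod_right'
  have hone (x) (hx : x ∈ enlargement Ω ν) : 1 ≤ T x := by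
    obtain ⟨z, hz, hxz⟩ := hx
    rw [← lintegral_dyadicKernel (ν z) z]
    refine lintegral_mono fun w => ?_
    by_cases hw : dyadicIndex (ν z) z = dyadicIndex (ν z) w
    · obtain ⟨hwΩ, hνw⟩ := hS.mem_and_eq_of_dyadicIndex_eq hz hw
      rw [Set.indicator_of_mem hwΩ, Pi.one_apply, mul_one]
      simp only [k, hνw]
      exact ENNReal.ofReal_le_ofReal (dyadicKernel_le_mul_bumpAt hxz)
    · rw [dyadicKernel, if_neg hw, ENNReal.ofReal_zero]
      exact zero_le
  calc volume (enlargement Ω ν) ≤ ∫⁻ x, T x := meas_le_lintegral₀ hT.aemeasurable hone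
    _ ≤ ENNReal.ofReal (10 * Real.pi) * ∫⁻ w, Ω.indicator 1 w :=
        lintegral_le_of_schur hk hind (fun _ => le_rfl) fun w =>
          (lintegral_mul_bumpAt_sub_right (by norm_num) (by positivity) w).le
    _ = _ := by rw [lintegral_indicator_one hS.measurableSet]

variable {A : ℝ} {K : ℤ → ℝ → ℂ} (hK : IsLittlewoodPaleyFamily A K) {x : ℝ}
include hK

lemma enorm_conv_badPart_le {h : ℝ → ℂ} (hm : Measurable h) (hi : Integrable h)
    (hx : x ∉ enlargement Ω ν) (i : ℤ) :
    ‖conv (K i) (badPart Ω ν h) x‖ₑ ≤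
      ∫⁻ z, ENNReal.ofReal (cancellationKernel A (ν z) i (x - z)) * ‖h z‖ₑ := by
  rw [conv, badPart, hS.isSymmSubMarkov.integral_mul_indicator_sub_kernelOp
    (W := fun y => K i (x - y)) hm hi ((hK.continuous i).comp (continuous_sub_left x)).measurable
    (fun y => hK.norm_le_zpow i (x - y)) hS.measurableSet]
  refine (enorm_integral_le_lintegral_enorm _).trans (lintegral_mono fun z => ?_)
  rw [enorm_mul]
  gcongr
  exact hK.enorm_indicator_sub_kernelOp_le hx i z

lemma sum_enorm_conv_badPart_le {r : ℝ} (hr : 0 < r) {f : ℤ → ℝ → ℂ} (hm : ∀ i, Measurable (f i))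
    (hi : ∀ i, Integrable (f i)) (hx : x ∉ enlargement Ω ν) (I : Finset ℤ) :
    ∑ i ∈ I, ‖conv (K i) (badPart Ω ν (f i)) x‖ₑ ≤
      ∫⁻ z, (∑ i ∈ I, ENNReal.ofReal (cancellationKernel A (ν z) i (x - z))) * seqNorm r f z := by
  calc ∑ i ∈ I, ‖conv (K i) (badPart Ω ν (f i)) x‖ₑ
      ≤ ∑ i ∈ I, ∫⁻ z, ENNReal.ofReal (cancellationKernel A (ν z) i (x - z)) * seqNorm r f z := by
        gcongr with i _
        refine (hS.enorm_conv_badPart_le hK (hm i) (hi i) hx i).trans ?_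
        gcongr with z
        exact enorm_le_seqNorm hr i z
    _ = _ := by
        simp only [Finset.sum_mul]
        refine (lintegral_finsetSum _ fun i _ => ?_).symm
        exact ((measurable_cancellationKernel_sub hS.measurable A i).comp
          (measurable_const.prodMk measurable_id)).mul (measurable_seqNorm hm)

end IsDyadicStopping

lemma lintegral_sum_cancellationKernel_mul_le {A : ℝ} (hA : 0 ≤ A) {ν : ℝ → ℤ} (hν : Measurable ν)
    (I : Finset ℤ) {g : ℝ → ℝ≥0∞} (hg : Measurable g) :
    ∫⁻ x, ∫⁻ z, (∑ i ∈ I, ENNReal.ofReal (cancellationKernel A (ν z) i (x - z))) * g z ≤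
      ENNReal.ofReal (30 * A * Real.pi) * ∫⁻ z, g z := by
  refine lintegral_le_of_schur
    (k := fun x z => ∑ i ∈ I, ENNReal.ofReal (cancellationKernel A (ν z) i (x - z)))
    (Finset.measurable_fun_sum I fun i _ => measurable_cancellationKernel_sub hν A i) hg
    (fun _ => le_rfl) fun z => ?_
  have hmeas (i : ℤ) : Measurable fun x => ENNReal.ofReal (cancellationKernel A (ν z) i (x - z)) :=
    ((measurable_cancellationKernel A (ν z) i).comp (measurable_id.sub_const z)).ennreal_ofReal
  rw [lintegral_finsetSum I fun i _ => hmeas i]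
  simp only [lintegral_cancellationKernel_sub_right hA, ← Finset.mul_sum]
  calc _ ≤ ENNReal.ofReal (10 * A * Real.pi) * ENNReal.ofReal ((1 + 1 / 2) / (1 - 1 / 2)) := by
        gcongr
        exact sum_ofReal_pow_natAbs_sub_le (by norm_num) (by norm_num) I (ν z)
    _ = ENNReal.ofReal (30 * A * Real.pi) := by
        rw [← ENNReal.ofReal_mul (by positivity)]
        congr 1
        ring

/-! ### The weak-type bound -/

lemma mul_measure_ge_rpow_le {α : Type*} [MeasurableSpace α] {P : Measure α} {r : ℝ} (hr : 1 ≤ r)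
    {V : α → ℝ≥0∞} (hV : Measurable V) {t c : ℝ≥0∞} (ht0 : 0 < t) (ht : t < ⊤)
    (h : ∫⁻ x, V x ∂P ≤ t ^ (r - 1) * c) : t * P {x | t ^ r ≤ V x} ≤ c := by
  have hne : t ^ (r - 1) ≠ 0 := (ENNReal.rpow_pos ht0 ht.ne).ne'
  have hnt : t ^ (r - 1) ≠ ⊤ := (ENNReal.rpow_lt_top_of_nonneg (by linarith) ht.ne).ne
  refine (ENNReal.mul_le_mul_iff_right hne hnt).1 ?_
  calc t ^ (r - 1) * (t * P {x | t ^ r ≤ V x}) = t ^ r * P {x | t ^ r ≤ V x} := by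
        rw [← mul_assoc]
        nth_rw 2 [← ENNReal.rpow_one t]
        rw [← ENNReal.rpow_add _ _ ht0.ne' ht.ne, sub_add_cancel]
    _ ≤ _ := (mul_meas_ge_le_lintegral hV _).trans h

section Window

variable {A r : ℝ} {K : ℤ → ℝ → ℂ} (hK : IsLittlewoodPaleyFamily A K) {f : ℤ → ℝ → ℂ}
  {Ω : Set ℝ} {ν : ℝ → ℤ} {lam : ℝ≥0∞} {s e : ℤ}
include hK

lemma IsDyadicStopping.setOf_lt_blockVariation_subset {H : ℝ → ℝ≥0∞}
    (hS : IsDyadicStopping H lam Ω ν) (hr : 1 ≤ r) (hm : ∀ i, Measurable (f i))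
    (hi : ∀ i, Integrable (f i)) (t : ℝ≥0∞) :
    {x | (2 * t) ^ r < blockVariation (‖·‖ₑ ^ r) (fun i => conv (K i) (f i) x) s e} ⊆
      {x | t ^ r ≤
        blockVariation (‖·‖ₑ ^ r) (fun i => conv (K i) (goodPart Ω ν (f i)) x) s e} ∪
      {x | t ≤ ∑ i ∈ Finset.Ioc s e, ‖conv (K i) (badPart Ω ν (f i)) x‖ₑ} := by
  intro x hx
  by_contra! hcon
  simp only [Set.mem_union, Set.mem_ofPred_eq, not_or, not_le] at hcon hx
  refine hx.not_ge ?_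
  have hsplit (i : ℤ) : conv (K i) (f i) x =
      conv (K i) (goodPart Ω ν (f i)) x + conv (K i) (badPart Ω ν (f i)) x := by
    rw [← hK.conv_add i (hS.integrable_goodPart (hm i) (hi i))
      (hS.integrable_badPart (hm i) (hi i)), goodPart_add_badPart]
  simp only [hsplit]
  calc _ ≤ 2 ^ (r - 1) * (t ^ r + t ^ r) := by
        refine (blockVariation_enorm_rpow_add_le hr _ _ s e).trans ?_
        gcongr _ * (?_ + ?_)
        · exact hcon.1.le
        · refine (blockVariation_enorm_rpow_le hr _ s e).trans ?_
          gcongr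
          exact hcon.2.le
    _ = (2 * t) ^ r := by
        rw [← two_mul, ← mul_assoc, ENNReal.mul_rpow_of_nonneg _ _ (by linarith)]
        congr 1
        nth_rw 2 [← ENNReal.rpow_one 2]
        rw [← ENNReal.rpow_add _ _ two_ne_zero ofNat_ne_top, sub_add_cancel]

lemma IsDyadicStopping.mul_volume_le_sum_enorm_conv_badPart_le
    (hS : IsDyadicStopping (seqNorm r f) lam Ω ν) (hr : 0 < r) (hm : ∀ i, Measurable (f i))
    (hi : ∀ i, Integrable (f i)) (I : Finset ℤ) :
    lam * volume {x | lam ≤ ∑ i ∈ I, ‖conv (K i) (badPart Ω ν (f i)) x‖ₑ} ≤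
      ENNReal.ofReal (30 * A * Real.pi + 10 * Real.pi) * ∫⁻ x, seqNorm r f x := by
  set P : ℝ → ℝ≥0∞ := fun x =>
    ∫⁻ z, (∑ i ∈ I, ENNReal.ofReal (cancellationKernel A (ν z) i (x - z))) * seqNorm r f z
  have hP : Measurable P :=
    Measurable.lintegral_prod_right' (f := fun p : ℝ × ℝ =>
      (∑ i ∈ I, ENNReal.ofReal (cancellationKernel A (ν p.2) i (p.1 - p.2))) * seqNorm r f p.2)
      ((Finset.measurable_fun_sum I fun i _ =>
        measurable_cancellationKernel_sub hS.measurable A i).mul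
          ((measurable_seqNorm hm).comp measurable_snd))
  have hsub : {x | lam ≤ ∑ i ∈ I, ‖conv (K i) (badPart Ω ν (f i)) x‖ₑ} ⊆
      {x | lam ≤ P x} ∪ enlargement Ω ν := fun x hx => or_iff_not_imp_right.2 fun hxΩ =>
    hx.trans (hS.sum_enorm_conv_badPart_le hK hr hm hi hxΩ I)
  calc lam * volume {x | lam ≤ ∑ i ∈ I, ‖conv (K i) (badPart Ω ν (f i)) x‖ₑ}
      ≤ lam * volume {x | lam ≤ P x} + ENNReal.ofReal (10 * Real.pi) * (lam * volume Ω) := by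
        rw [mul_left_comm, ← mul_add]
        gcongr
        refine (measure_mono hsub).trans ((measure_union_le _ _).trans ?_)
        gcongr
        exact hS.volume_enlargement_le
    _ ≤ ENNReal.ofReal (30 * A * Real.pi) * (∫⁻ x, seqNorm r f x) +
          ENNReal.ofReal (10 * Real.pi) * ∫⁻ x, seqNorm r f x := by
        gcongr ?_ + _ * ?_
        · exact (mul_meas_ge_le_lintegral hP lam).trans
            (lintegral_sum_cancellationKernel_mul_le hK.nonneg hS.measurable I
              (measurable_seqNorm hm))
        · exact hS.mul_volume_le (measurable_seqNorm hm)
    _ = _ := by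
        have := hK.nonneg
        rw [← add_mul, ← ENNReal.ofReal_add (by positivity) (by positivity)]

end Window

lemma exists_mul_volume_lt_blockVariation_le {r : ℝ} (hr1 : 1 ≤ r) (hr2 : r < 2) (A : ℝ) :
    ∃ C : ℝ≥0, ∀ K : ℤ → ℝ → ℂ, IsLittlewoodPaleyFamily A K → ∀ f : ℤ → ℝ → ℂ,
      (∀ i, Measurable (f i)) → ∫⁻ x, seqNorm r f x < ⊤ → ∀ t : ℝ≥0∞, 0 < t → t < ⊤ →
      ∀ s e : ℤ,
        t * volume {x | (2 * t) ^ r <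
          blockVariation (‖·‖ₑ ^ r) (fun i => conv (K i) (f i) x) s e} ≤
        C * ∫⁻ x, seqNorm r f x := by
  obtain ⟨C, hC⟩ := exists_lintegral_blockVariation_rpow_le hr1 hr2 A
  have hr0 : 0 < r := by linarith
  refine ⟨C * (2 ^ (r - 1) * 2) + (30 * A * Real.pi + 10 * Real.pi).toNNReal,
    fun K hK f hm hf t ht0 ht s e => ?_⟩
  obtain ⟨Ω, ν, hS⟩ := exists_isDyadicStopping (measurable_seqNorm hm) hf ht0
  have hi := integrable_of_lintegral_seqNorm_lt_top hr0 hm hf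
  set V : ℝ → ℝ≥0∞ := fun x =>
    blockVariation (‖·‖ₑ ^ r) (fun i => conv (K i) (goodPart Ω ν (f i)) x) s e
  have hV : Measurable V :=
    measurable_blockVariation (measurable_snd.enorm.pow_const r) fun i =>
      hK.measurable_conv i (hS.measurable_goodPart (hm i))
  have hgood : t * volume {x | t ^ r ≤ V x} ≤
      C * (2 ^ (r - 1) * 2) * ∫⁻ x, seqNorm r f x := by
    refine mul_measure_ge_rpow_le hr1 hV ht0 ht ?_
    calc ∫⁻ x, V x ≤ C * ((2 * t) ^ (r - 1) * (2 * ∫⁻ x, seqNorm r f x)) := by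
          refine (hC K hK _ (fun i => hS.measurable_goodPart (hm i))
            (fun i => hS.integrable_goodPart (hm i) (hi i)) s e).trans ?_
          gcongr
          exact hS.sum_lintegral_enorm_goodPart_rpow_le hr1 hm hf ht _
      _ = _ := by
          rw [ENNReal.mul_rpow_of_nonneg _ _ (by linarith)]
          ring
  calc _ ≤ t * volume {x | t ^ r ≤ V x} +
        t * volume {x | t ≤ ∑ i ∈ Finset.Ioc s e, ‖conv (K i) (badPart Ω ν (f i)) x‖ₑ} := by
        rw [← mul_add]
        gcongr
        exact (measure_mono (hS.setOf_lt_blockVariation_subset hK hr1 hm hi t)).trans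
          (measure_union_le _ _)
    _ ≤ _ := by
        refine (add_le_add hgood
          (hS.mul_volume_le_sum_enorm_conv_badPart_le hK hr0 hm hi _)).trans_eq ?_
        rw [← add_mul, ENNReal.coe_add, ENNReal.coe_mul, ENNReal.coe_mul,
          ENNReal.coe_rpow_of_nonneg _ (by linarith)]
        rfl

theorem weak_type_one_one_variational_general {r : ℝ} (hr1 : 1 ≤ r) (hr2 : r < 2) (A : ℝ) :
    ∃ C : ℝ≥0, 0 < C ∧ ∀ K : ℤ → ℝ → ℂ, IsLittlewoodPaleyFamily A K →
      ∀ N : ℕ → ℝ → ℤ, (∀ k x, N k x ≤ N (k + 1) x) →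
      ∀ f : ℤ → ℝ → ℂ, (∀ i, Measurable (f i)) → mixedNorm1 r f < ⊤ →
      ∀ lam : ℝ, 0 < lam →
      volume {x : ℝ | ENNReal.ofReal lam <
          (∑' k : ℕ, (ENNReal.ofReal ‖∑ i ∈ Finset.Ioc (N k x) (N (k + 1) x),
            conv (K i) (f i) x‖) ^ r) ^ (1 / r)} ≤
        C / ENNReal.ofReal lam * mixedNorm1 r f := by
  obtain ⟨C, hC⟩ := exists_mul_volume_lt_blockVariation_le hr1 hr2 A
  have hr0 : 0 < r := by linarith
  refine ⟨2 * C + 1, by positivity, fun K hK N hN f hm hf lam hlam => ?_⟩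
  simp only [ofReal_norm, ← lintegral_seqNorm] at hf ⊢
  set L := ENNReal.ofReal lam
  have hL0 : L ≠ 0 := (ENNReal.ofReal_pos.2 hlam).ne'
  have hLtop : L ≠ ⊤ := ENNReal.ofReal_ne_top
  have h2L : 2 * (L / 2) = L := ENNReal.mul_div_cancel two_ne_zero ofNat_ne_top
  set S : ℕ → Set ℝ := fun M =>
    {x | L ^ r < blockVariation (‖·‖ₑ ^ r) (fun i => conv (K i) (f i) x) (-M) M}
  have hSmono : Monotone S := fun M M' hM x hx =>
    hx.trans_le (blockVariation_mono_window (by lia) (by lia))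
  have hS : L / 2 * volume (⋃ M, S M) ≤ C * ∫⁻ x, seqNorm r f x := by
    rw [hSmono.measure_iUnion, ENNReal.mul_iSup]
    refine iSup_le fun M => ?_
    simpa only [h2L] using hC K hK f hm hf (L / 2) (ENNReal.half_pos hL0)
      (ENNReal.div_lt_top hLtop two_ne_zero) (-M) M
  rw [← ENNReal.mul_div_right_comm, ENNReal.le_div_iff_mul_le (.inl hL0) (.inl hLtop), mul_comm]
  calc _ ≤ L * volume (⋃ M, S M) := by
        gcongr
        refine fun x hx => Set.mem_iUnion.2 (exists_lt_blockVariation_of_lt_tsum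
          (Φ := (‖·‖ₑ ^ r)) (fun k => hN k x) ?_)
        rwa [Set.mem_ofPred_eq, one_div, ENNReal.lt_rpow_inv_iff hr0] at hx
    _ = 2 * (L / 2 * volume (⋃ M, S M)) := by rw [← mul_assoc, h2L]
    _ ≤ 2 * (C * ∫⁻ x, seqNorm r f x) := by gcongr
    _ ≤ _ := by
        rw [← mul_assoc]
        gcongr
        push_cast
        exact le_self_add

/-- The weak-type `(1,1)` Calderón–Zygmund endpoint used to lower the exponent in the
continuous Pisier–Xu inequality. -/
theorem weak_type_one_one_variational
    (r Nb : ℝ) (hr1 : 1 ≤ r) (hr2 : r < 2) (hNb : 0 < Nb)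
    (φ : SchwartzMap ℝ ℂ)
    (hφ : ∀ ξ : ℝ, 𝓕 (⇑φ) ξ ≠ 0 → (2 : ℝ) ^ (-Nb) < |ξ| ∧ |ξ| < (2 : ℝ) ^ Nb) :
    ∃ C : ℝ≥0, 0 < C ∧
      ∀ (Nk : ℕ → ℝ → ℤ), IsJumpCollection Nk →
      ∀ (f : ℤ → ℝ → ℂ), (∀ i, Measurable (f i)) → mixedNorm1 r f < ⊤ →
      ∀ lam : ℝ, 0 < lam →
      volume {x : ℝ |
          ENNReal.ofReal lam <
            (∑' k : ℕ, (ENNReal.ofReal (norm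
              (∑ i ∈ Finset.Ioc (Nk k x) (Nk (k + 1) x),
                conv (dilate φ i) (f i) x))) ^ r) ^ (1 / r)}
        ≤ (C : ℝ≥0∞) / ENNReal.ofReal lam * mixedNorm1 r f := by
  have hmean : ∫ x, φ x = 0 := integral_eq_zero_of_lt_abs_of_fourier_ne_zero
    (Real.rpow_nonneg zero_le_two (-Nb)) fun ξ h => (hφ ξ h).1
  obtain ⟨A, hA⟩ := exists_isLittlewoodPaleyFamily_dilate hmean
  obtain ⟨C, hC0, hC⟩ := weak_type_one_one_variational_general hr1 hr2 A
  exact ⟨C, hC0, fun Nk hNk => hC (dilate φ) hA Nk hNk.2⟩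

end
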